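/- Let B ⊂ ℝ⁴ be open, f = (f⁴,…,f⁷): B → ℝ⁴ and A = (A⁰,…,A³): B → ℝ⁴ smooth, with F_∇^S, F_∇^B, F_∇ = F_∇^B + F_∇^S, tangent vectors v_j(x) and β = −√−1·F_∇^B as in the context. Then the following are equivalent: (1) τ(v₀(x),…,v₃(x)) = 0 for every x ∈ B (the graph S is Cayley with an appropriate orientation) and, for every x ∈ B, the 2-form β(x) on ℝ⁴ is anti-self-dual with respect to the induced metric g(x) (g_{ij}(x) = ⟨v_i(x),v_j(x)⟩) and the orientation of ℝ⁴ that is sign(Φ(v₀(x),…,v₃(x))) times the standard one (this sign is well defined since Φ(v₀,…,v₃) ≠ 0 when τ vanishes); (2) π²₇( F_∇ + (1/6)·*₈F_∇³ ) = 0 and π⁴₇( F_∇² ) = 0 at every point of B. -/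

import Mathlib

open scoped BigOperators

noncomputable section

namespace FMpaper

variable {K : Type*} [NormedField K] [NormedAlgebra ℝ K]

/-- Coefficient model for the exterior algebra of `(ℝⁿ)*` with scalars in `K`:
a form is given by its coefficients on the basis `e^S`, `S ⊆ {0, …, n-1}` sorted. -/
abbrev Form (K : Type*) (n : ℕ) := Finset (Fin n) → K

variable {n : ℕ}

/-- Sign such that `e^s ∧ e^t = signMerge s t • e^(s ∪ t)` for disjoint sorted `s, t`. -/
def signMerge (s t : Finset (Fin n)) : K :=
  (-1 : K) ^ (((s ×ˢ t).filter (fun p => p.2 < p.1)).card)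

/-- Wedge product. -/
def wedge (α β : Form K n) : Form K n :=
  fun u => ∑ s ∈ u.powerset, signMerge s (u \ s) * α s * β (u \ s)

/-- Hodge star operator (for the standard inner product and orientation `e^{0⋯(n-1)}`). -/
def hstar (α : Form K n) : Form K n :=
  fun t => signMerge tᶜ t * α tᶜ

/-- Interior product with the basis vector `e_μ`. -/
def iprodB (μ : Fin n) (α : Form K n) : Form K n :=
  fun t => if μ ∈ t then 0
    else (-1 : K) ^ ((t.filter (fun j => j < μ)).card) * α (insert μ t)

/-- Interior product with the vector `v`. -/
def iprod (v : Fin n → K) (α : Form K n) : Form K n :=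
  fun t => ∑ μ, v μ * iprodB μ α t

/-- The basis covector `e^i` as a 1-form. -/
def e1 (i : Fin n) : Form K n := fun s => if s = {i} then 1 else 0

/-- The covector `v♭` dual to a vector `v`. -/
def flat (v : Fin n → K) : Form K n := ∑ i, v i • e1 i

/-- The vector `α♯` dual to a 1-form `α`. -/
def sharp1 (α : Form K n) : Fin n → K := fun i => α {i}

/-- The inner product of forms (extended `K`-bilinearly). -/
def inner' (α β : Form K n) : K := ∑ s, α s * β s

/-- The (Euclidean) norm of a form; for an `√-1 ℝ`-valued form `√-1 γ` this is `‖γ‖`. -/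
def fnorm (α : Form K n) : ℝ := Real.sqrt (∑ s, ‖α s‖ ^ 2)

/-- `α` is homogeneous of degree `k`. -/
def isGrade (k : ℕ) (α : Form K n) : Prop := ∀ s, s.card ≠ k → α s = 0

/-- Evaluation of a `k`-form on `k` vectors. -/
def evalForm {k : ℕ} (α : Form K n) (v : Fin k → (Fin n → K)) : K :=
  ∑ s : Finset (Fin n), α s *
    (if h : s.card = k then
      Matrix.det (Matrix.of fun i j => v i ((s.orderIsoOfFin h j : Fin n))) else 0)

/-- The matrix of the skew-symmetric endomorphism `γ♯` associated with a 2-form `γ`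
via `⟨γ♯ u, v⟩ = γ(u, v)`. -/
def mat2 (γ : Form K n) : Matrix (Fin n) (Fin n) K :=
  Matrix.of fun i j => if i < j then γ {i, j} else if j < i then - γ {i, j} else 0

/-- The standard `G₂` 3-form `φ = e^{123}+e^{145}+e^{167}+e^{246}−e^{257}−e^{347}−e^{356}`
on `ℝ⁷` (indices `1, …, 7` shifted to `0, …, 6`). -/
def phi7 : Form K 7 := fun s =>
  if s = ({0, 1, 2} : Finset (Fin 7)) then 1
  else if s = ({0, 3, 4} : Finset (Fin 7)) then 1
  else if s = ({0, 5, 6} : Finset (Fin 7)) then 1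
  else if s = ({1, 3, 5} : Finset (Fin 7)) then 1
  else if s = ({1, 4, 6} : Finset (Fin 7)) then -1
  else if s = ({2, 3, 6} : Finset (Fin 7)) then -1
  else if s = ({2, 4, 5} : Finset (Fin 7)) then -1
  else 0

/-- `*₇φ = e^{4567}+e^{2367}+e^{2345}+e^{1357}−e^{1346}−e^{1256}−e^{1247}` on `ℝ⁷`. -/
def psi7 : Form K 7 := fun s =>
  if s = ({3, 4, 5, 6} : Finset (Fin 7)) then 1
  else if s = ({1, 2, 5, 6} : Finset (Fin 7)) then 1
  else if s = ({1, 2, 3, 4} : Finset (Fin 7)) then 1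
  else if s = ({0, 2, 4, 6} : Finset (Fin 7)) then 1
  else if s = ({0, 2, 3, 5} : Finset (Fin 7)) then -1
  else if s = ({0, 1, 4, 5} : Finset (Fin 7)) then -1
  else if s = ({0, 1, 3, 6} : Finset (Fin 7)) then -1
  else 0

/-- The `G₂` 3-form `φ` on `V = span{e₁, …, e₇} ⊂ ℝ⁸`, regarded as a form on `ℝ⁸`
annihilated by `i(e₀)` (indices `1, …, 7` of `ℝ⁸`). -/
def phi8 : Form K 8 := fun s =>
  if s = ({1, 2, 3} : Finset (Fin 8)) then 1
  else if s = ({1, 4, 5} : Finset (Fin 8)) then 1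
  else if s = ({1, 6, 7} : Finset (Fin 8)) then 1
  else if s = ({2, 4, 6} : Finset (Fin 8)) then 1
  else if s = ({2, 5, 7} : Finset (Fin 8)) then -1
  else if s = ({3, 4, 7} : Finset (Fin 8)) then -1
  else if s = ({3, 5, 6} : Finset (Fin 8)) then -1
  else 0

/-- `*₇φ` on `V ⊂ ℝ⁸`, regarded as a 4-form on `ℝ⁸` annihilated by `i(e₀)`. -/
def psi8 : Form K 8 := fun s =>
  if s = ({4, 5, 6, 7} : Finset (Fin 8)) then 1
  else if s = ({2, 3, 6, 7} : Finset (Fin 8)) then 1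
  else if s = ({2, 3, 4, 5} : Finset (Fin 8)) then 1
  else if s = ({1, 3, 5, 7} : Finset (Fin 8)) then 1
  else if s = ({1, 3, 4, 6} : Finset (Fin 8)) then -1
  else if s = ({1, 2, 5, 6} : Finset (Fin 8)) then -1
  else if s = ({1, 2, 4, 7} : Finset (Fin 8)) then -1
  else 0

/-- The standard Cayley 4-form `Φ = e⁰ ∧ φ + *₇φ` on `ℝ⁸`. -/
def Phi8 : Form K 8 := wedge (e1 0) phi8 + psi8

/-- The index set of `V = span{e₁, …, e₇} ⊂ ℝ⁸`. -/
def Vset : Finset (Fin 8) := {1, 2, 3, 4, 5, 6, 7}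

/-- The Hodge star `*₇` of `V ⊂ ℝ⁸` (volume form `e^{1⋯7}`), acting on forms on `ℝ⁸`
annihilated by `i(e₀)`. -/
def star7 (α : Form K 8) : Form K 8 :=
  fun t => if (0 : Fin 8) ∈ t then 0 else signMerge (Vset \ t) t * α (Vset \ t)

/-- `α` is (the pullback of) a form on `V`, i.e. `i(e₀) α = 0`. -/
def onV (α : Form K 8) : Prop := ∀ s, (0 : Fin 8) ∈ s → α s = 0

/-- `λ²(α) = ½ (e⁰ ∧ α + i(α♯) φ)` for `α ∈ V*`. -/
def lambda2 (α : Form K 8) : Form K 8 :=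
  (2 : K)⁻¹ • (wedge (e1 0) α + iprod (sharp1 α) phi8)

/-- `λ⁴(α) = (1/√8) (e⁰ ∧ i(α♯) *₇φ − α ∧ φ)` for `α ∈ V*`. -/
def lambda4 (α : Form K 8) : Form K 8 :=
  (algebraMap ℝ K (Real.sqrt 8))⁻¹ • (wedge (e1 0) (iprod (sharp1 α) psi8) - wedge α phi8)

/-- `λ⁶(α) = *₈ λ²(α)` for `α ∈ V*`. -/
def lambda6 (α : Form K 8) : Form K 8 := hstar (lambda2 α)

/-- The projection `π²₇(α) = (α + *₈(Φ ∧ α))/4` onto `Λ²₇`. -/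
def pi27 (α : Form K 8) : Form K 8 := (4 : K)⁻¹ • (α + hstar (wedge Phi8 α))

/-- The projection `π⁴₇(β) = Σ_{μ=1}^{7} ⟨β, λ⁴(e^μ)⟩ λ⁴(e^μ)` onto `Λ⁴₇`. -/
def pi47 (β : Form K 8) : Form K 8 :=
  ∑ μ : Fin 7, inner' β (lambda4 (e1 μ.succ)) • lambda4 (e1 μ.succ)

/-- `τ(u₀,u₁,u₂,u₃) = Σ_{μ=1}^{7} λ⁴(e^μ)(u₀,u₁,u₂,u₃) ⬝ λ⁴(e^μ) = π⁴₇(u₀♭∧u₁♭∧u₂♭∧u₃♭)`. -/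
def tau4 (u : Fin 4 → (Fin 8 → K)) : Form K 8 :=
  ∑ μ : Fin 7, evalForm (lambda4 (e1 μ.succ)) u • lambda4 (e1 μ.succ)

/-- Partial derivative `∂f^a/∂x^j` at `x`. -/
def pd {m p : ℕ} (f : (Fin m → ℝ) → (Fin p → ℝ)) (x : Fin m → ℝ) (j : Fin m) (a : Fin p) : ℝ :=
  fderiv ℝ f x (Pi.single j 1) a

/-! Graph setting for Cayley `T⁴`-fibrations: `ℝ⁸ = ℝ⁴ × ℝ⁴` with coordinates
`(x⁰,…,x³,y⁴,…,y⁷)`. -/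

/-- The index of the coordinate `x^j` in `ℝ⁸`. -/
def xi (j : Fin 4) : Fin 8 := Fin.castAdd 4 j

/-- The index of the coordinate `y^a` (`a = 4,…,7` shifted to `0,…,3`) in `ℝ⁸`. -/
def yi (a : Fin 4) : Fin 8 := a.addNat 4

/-- The spanning tangent vectors `v_j = ∂_j + Σ_a (∂f^a/∂x^j) ∂_a` of the graph of `f`. -/
def vG (f : (Fin 4 → ℝ) → (Fin 4 → ℝ)) (x : Fin 4 → ℝ) (j : Fin 4) : Fin 8 → ℝ :=
  Pi.single (xi j) 1 + ∑ a : Fin 4, pd f x j a • (Pi.single (yi a) 1 : Fin 8 → ℝ)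

/-- The real 2-form `γ` with `F_∇^S = √-1 γ`, i.e. `γ = Σ_{j,a} (∂f^a/∂x^j) dx^j ∧ dy^a`. -/
def gammaS (f : (Fin 4 → ℝ) → (Fin 4 → ℝ)) (x : Fin 4 → ℝ) : Form ℝ 8 :=
  ∑ j : Fin 4, ∑ a : Fin 4, pd f x j a • wedge (e1 (xi j)) (e1 (yi a))

/-- The `√-1 ℝ`-valued curvature 2-form
`F_∇^S = √-1 Σ_{j,a} (∂f^a/∂x^j) dx^j ∧ dy^a` of the real Fourier–Mukai transform. -/
def FS8 (f : (Fin 4 → ℝ) → (Fin 4 → ℝ)) (x : Fin 4 → ℝ) : Form ℂ 8 :=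
  fun s => Complex.I * (gammaS f x s : ℂ)

/-! Anti-self-duality on `ℝ⁴` with respect to an arbitrary metric `G` and
orientation `ε` times the standard one. -/

/-- The indicator 2-form `e^u` on `ℝ⁴`. -/
def indF (u : Finset (Fin 4)) : Form ℝ 4 := fun s => if s = u then 1 else 0

/-- The 2×2 minor `det (H_{s t})` of a matrix `H` with rows `s` and columns `t` (sorted). -/
def minor2 (H : Matrix (Fin 4) (Fin 4) ℝ) (s t : Finset (Fin 4)) : ℝ :=
  if hs : s.card = 2 then
    if ht : t.card = 2 then
      Matrix.det (Matrix.of fun i j =>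
        H (s.orderIsoOfFin hs i : Fin 4) (t.orderIsoOfFin ht j : Fin 4))
    else 0
  else 0

/-- The inner product on 2-forms on `ℝ⁴` induced by the metric whose *inverse* Gram
matrix is `H`:  `⟨e^s, e^t⟩ = det (H_{s t})`. -/
def innerG2 (H : Matrix (Fin 4) (Fin 4) ℝ) (α β : Form ℝ 4) : ℝ :=
  ∑ s, ∑ t, α s * β t * minor2 H s t

/-- The Hodge star on 2-forms on `ℝ⁴` for the metric with Gram matrix `G` (in the standard
basis) and the orientation which is `ε` times the standard one:  it is determined by
`γ ∧ (starG G ε β) = ⟨γ, β⟩_G · ε · √(det G) · e^{0123}`. -/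
def starG (G : Matrix (Fin 4) (Fin 4) ℝ) (ε : ℝ) (β : Form ℝ 4) : Form ℝ 4 :=
  fun t => (signMerge tᶜ t : ℝ) * ε * Real.sqrt G.det * innerG2 G⁻¹ (indF tᶜ) β

/-- The real 2-form `γ^B` with `F_∇^B = √-1 γ^B`, i.e.
`γ^B = Σ_{i,j} (∂A^j/∂x^i) dx^i ∧ dx^j`. -/
def gammaB8 (A : (Fin 4 → ℝ) → (Fin 4 → ℝ)) (x : Fin 4 → ℝ) : Form ℝ 8 :=
  ∑ i : Fin 4, ∑ j : Fin 4, pd A x i j • wedge (e1 (xi i)) (e1 (xi j))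

/-- The `√-1 ℝ`-valued curvature `F_∇^B = √-1 Σ_{i,j} (∂A^j/∂x^i) dx^i ∧ dx^j`. -/
def FB8 (A : (Fin 4 → ℝ) → (Fin 4 → ℝ)) (x : Fin 4 → ℝ) : Form ℂ 8 :=
  fun s => Complex.I * (gammaB8 A x s : ℂ)

/-- The real 2-form `β = -√-1 F_∇^B` regarded as a 2-form on `ℝ⁴ ⊇ B`. -/
def beta4 (A : (Fin 4 → ℝ) → (Fin 4 → ℝ)) (x : Fin 4 → ℝ) : Form ℝ 4 :=
  ∑ i : Fin 4, ∑ j : Fin 4, pd A x i j • wedge (e1 i) (e1 j)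

/-- The Gram matrix `g_{ij} = ⟨v_i, v_j⟩` of the metric induced on the graph of `f`. -/
def gram8 (f : (Fin 4 → ℝ) → (Fin 4 → ℝ)) (x : Fin 4 → ℝ) : Matrix (Fin 4) (Fin 4) ℝ :=
  Matrix.of fun i j => ∑ k, vG f x i k * vG f x j k

/-- The sign `sign (Φ(v₀,v₁,v₂,v₃))` fixing the orientation which makes the graph Cayley. -/
def eps8 (f : (Fin 4 → ℝ) → (Fin 4 → ℝ)) (x : Fin 4 → ℝ) : ℝ :=
  Real.sign (evalForm Phi8 (fun j => vG f x j))

/-!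
At a fixed point both conditions concern only the 1-jets of `f` and `A`, so the theorem is one of
linear algebra. The 2-forms `σ_μ = 2 λ²(e^μ)` are the components of a twofold cross product on `ℝ⁸`
satisfying `⟨a × b, c × d⟩ = ⟨a, c⟩⟨b, d⟩ - ⟨a, d⟩⟨b, c⟩ + Φ(a, b, c, d)`. It follows that
`Φ(v)² = det g` for every frame `v` with `τ(v) = 0`, so that the volume form of the induced metric,
for the orientation given by the sign of `Φ(v)`, is `Φ(v) e^{0123}`. For a 2-form `β` the same
identity identifies `⋆_g β = -β` with the vanishing of all `β ∧ v^*σ_μ`.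

The spans of `σ_μ` and `λ⁴(e^μ)` are the images of the two projections, and each of the two
curvature equations has seven components. For `F_∇²` these are, up to nonzero factors, the first
three components of `τ` and the last four of `β ∧ v^*σ`; for `F_∇ + (1/6) *₈ F_∇³` they are the
first three of `β ∧ v^*σ` and the last four of `τ`.
-/

variable {𝕜 R : Type*} [NormedField 𝕜] [CommRing R]

/-! ### Forms with integer coefficients -/

/-- The sign `signMerge` as an integer, so that identities between structure constants are
decidable. -/
def intSign (s t : Finset (Fin n)) : ℤ :=
  (-1 : ℤ) ^ ((s ×ˢ t).filter fun p => p.2 < p.1).card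

theorem signMerge_eq_intCast (s t : Finset (Fin n)) : (signMerge s t : 𝕜) = (intSign s t : 𝕜) := by
  simp [signMerge, intSign]

theorem wedge_e1_apply (i : Fin n) (β : Form 𝕜 n) (u : Finset (Fin n)) :
    wedge (e1 i) β u = if i ∈ u then (intSign {i} (u \ {i}) : 𝕜) * β (u \ {i}) else 0 := by
  unfold wedge
  split_ifs with hi
  · rw [Finset.sum_eq_single_of_mem {i} (by simpa using hi) fun s _ hs => by simp [e1, hs]]
    simp [e1, signMerge_eq_intCast]
  · refine Finset.sum_eq_zero fun s hs => ?_
    have h_ne : s ≠ {i} := by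
      rintro rfl
      exact hi (by simpa using hs)
    simp [e1, h_ne]

/-- The form over a ring `R` with given integer coefficients. -/
def castForm (b : Form ℤ n) : Form R n := fun s => (b s : R)

/-- A form with integer coefficients, given as a list of its terms. -/
abbrev SparseForm (n : ℕ) := List (Finset (Fin n) × ℤ)

namespace SparseForm

/-- The coefficient of `e^s`. -/
def coeff (T : SparseForm n) : Form ℤ n :=
  fun s => (T.map fun p => if p.1 = s then p.2 else 0).sum

/-- The inner product with a form over a ring `R`, with one summand for each term of `T`. -/
def pair (T : SparseForm n) (α : Form R n) : R :=
  (T.map fun p => (p.2 : R) * α p.1).sum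

theorem coeff_cons_of_coeff_eq_zero {p : Finset (Fin n) × ℤ} {T : SparseForm n}
    (hp : T.coeff p.1 = 0) (s : Finset (Fin n)) :
    coeff (p :: T) s = if s = p.1 then p.2 else T.coeff s := by
  rw [coeff, List.map_cons, List.sum_cons, ← coeff]
  by_cases hs : s = p.1
  · simp [hs, hp]
  · simp [hs, Ne.symm hs]

theorem coeff_append (S T : SparseForm n) : (S ++ T).coeff = S.coeff + T.coeff := by
  funext s
  simp [coeff]

theorem coeff_eq_of_perm {S T : SparseForm n} (h : S.Perm T) : S.coeff = T.coeff := by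
  funext s
  exact (h.map _).sum_eq

/-- The negative of a sparse form. -/
def neg (T : SparseForm n) : SparseForm n := T.map fun p => (p.1, -p.2)

theorem coeff_neg (T : SparseForm n) : T.neg.coeff = -T.coeff := by
  funext s
  induction T with
  | nil => simp [coeff, neg]
  | cons p T ih =>
    simp only [coeff, neg, List.map_cons, List.sum_cons, Pi.neg_apply] at ih ⊢
    rw [ih]
    split_ifs <;> simp [add_comm]

/-- Exterior multiplication by `e^i` on the left, term by term. -/
def extMul (i : Fin n) (T : SparseForm n) : SparseForm n :=
  (T.filter fun p => i ∉ p.1).map fun p => (insert i p.1, intSign {i} p.1 * p.2)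

theorem coeff_extMul (i : Fin n) (T : SparseForm n) (u : Finset (Fin n)) :
    (T.extMul i).coeff u = if i ∈ u then intSign {i} (u \ {i}) * T.coeff (u \ {i}) else 0 := by
  induction T with
  | nil => simp [extMul, coeff]
  | cons p T ih =>
    by_cases hp : i ∈ p.1
    · have h_ne : p.1 ≠ u \ {i} := fun h => by simp [h] at hp
      rw [extMul, List.filter_cons_of_neg (by simpa using hp), ← extMul, ih]
      simp [coeff, h_ne]
    · have h_iff : insert i p.1 = u ↔ i ∈ u ∧ p.1 = u \ {i} := by
        constructor
        · rintro rfl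
          exact ⟨Finset.mem_insert_self _ _,
            by rw [Finset.sdiff_singleton_eq_erase, Finset.erase_insert hp]⟩
        · rintro ⟨hu, h⟩
          rw [h, Finset.insert_sdiff_self_of_mem hu]
      rw [extMul, List.filter_cons_of_pos (by simpa using hp), List.map_cons, coeff, List.map_cons,
        List.sum_cons, ← coeff, ← extMul, ih]
      simp only [h_iff, coeff, List.map_cons, List.sum_cons]
      split_ifs <;> simp_all [mul_add]

/-- Contraction with `e_i`, term by term. -/
def contract (i : Fin n) (T : SparseForm n) : SparseForm n :=
  (T.filter fun p => i ∈ p.1).map fun p =>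
    (p.1.erase i, (-1) ^ ((p.1.erase i).filter fun j => j < i).card * p.2)

theorem coeff_contract (i : Fin n) (T : SparseForm n) (t : Finset (Fin n)) :
    (T.contract i).coeff t =
      if i ∈ t then 0 else (-1) ^ (t.filter fun j => j < i).card * T.coeff (insert i t) := by
  induction T with
  | nil => simp [contract, coeff]
  | cons p T ih =>
    by_cases hp : i ∈ p.1
    · have h_iff : p.1.erase i = t ↔ i ∉ t ∧ p.1 = insert i t := by
        constructor
        · rintro rfl
          simp [Finset.insert_erase hp]
        · rintro ⟨ht, h⟩
          rw [h, Finset.erase_insert ht]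
      rw [contract, List.filter_cons_of_pos (by simpa using hp), List.map_cons, coeff,
        List.map_cons, List.sum_cons, ← coeff, ← contract, ih]
      simp only [h_iff, coeff, List.map_cons, List.sum_cons]
      split_ifs <;> simp_all [mul_add]
    · have h_ne : p.1 ≠ insert i t := fun h => by simp [h] at hp
      rw [contract, List.filter_cons_of_neg (by simpa using hp), ← contract, ih]
      simp [coeff, h_ne]

theorem sum_castForm_coeff_mul (T : SparseForm n) (α : Form R n) :
    ∑ s, (castForm T.coeff s : R) * α s = T.pair α := by
  induction T with
  | nil => simp [castForm, coeff, pair]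
  | cons p T ih =>
    have h_cons (s : Finset (Fin n)) : (castForm (coeff (p :: T)) s : R) * α s
        = (if p.1 = s then (p.2 : R) * α s else 0) + (castForm (coeff T) s : R) * α s := by
      simp only [castForm, coeff, List.map_cons, List.sum_cons, Int.cast_add]
      split_ifs <;> simp [add_mul]
    simp only [h_cons, Finset.sum_add_distrib, ih]
    simp [pair]

theorem pair_castForm (T : SparseForm n) (b : Form ℤ n) :
    T.pair (castForm b : Form R n) = ((T.pair b : ℤ) : R) := by
  simp [pair, castForm, Function.comp_def]

end SparseForm

theorem wedge_e1_castForm_coeff (i : Fin n) (T : SparseForm n) :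
    wedge (e1 i) (castForm T.coeff : Form 𝕜 n) = castForm (T.extMul i).coeff := by
  funext u
  rw [wedge_e1_apply, castForm, castForm, SparseForm.coeff_extMul]
  split_ifs <;> simp

theorem iprod_sharp1_e1_castForm_coeff (i : Fin n) (T : SparseForm n) :
    iprod (sharp1 (e1 i)) (castForm T.coeff : Form 𝕜 n) = castForm (T.contract i).coeff := by
  funext t
  unfold iprod
  rw [Finset.sum_eq_single_of_mem i (Finset.mem_univ i) fun j _ hj => by simp [sharp1, e1, hj]]
  simp only [sharp1, e1, iprodB, SparseForm.coeff_contract, castForm]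
  split_ifs <;> simp_all

theorem castForm_coeff_append (S T : SparseForm n) :
    (castForm (S ++ T).coeff : Form R n) = castForm S.coeff + castForm T.coeff := by
  funext s
  simp [castForm, SparseForm.coeff_append]

theorem castForm_coeff_neg (T : SparseForm n) :
    (castForm T.neg.coeff : Form R n) = -castForm T.coeff := by
  funext s
  simp [castForm, SparseForm.coeff_neg]

theorem inner'_comm (α β : Form 𝕜 n) : inner' α β = inner' β α := by
  simp only [inner', mul_comm]

theorem inner'_smul_left (c : 𝕜) (α β : Form 𝕜 n) : inner' (c • α) β = c * inner' α β := by
  simp only [inner', Pi.smul_apply, smul_eq_mul, mul_assoc, Finset.mul_sum]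

theorem inner'_smul_right (c : 𝕜) (α β : Form 𝕜 n) : inner' α (c • β) = c * inner' α β := by
  rw [inner'_comm, inner'_smul_left, inner'_comm]

theorem inner'_sum_left {ι : Type*} [Fintype ι] (F : ι → Form 𝕜 n) (β : Form 𝕜 n) :
    inner' (∑ i, F i) β = ∑ i, inner' (F i) β := by
  simp only [inner', Finset.sum_apply, Finset.sum_mul]
  exact Finset.sum_comm

theorem inner'_castForm_coeff_left (T : SparseForm n) (α : Form 𝕜 n) :
    inner' (castForm T.coeff) α = T.pair α :=
  T.sum_castForm_coeff_mul α

theorem sum_smul_eq_zero_iff_of_orthonormal {ι : Type*} [Fintype ι] [DecidableEq ι]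
    {F : ι → Form 𝕜 n} (hF : ∀ i j, inner' (F i) (F j) = if i = j then 1 else 0) (c : ι → 𝕜) :
    ∑ i, c i • F i = 0 ↔ ∀ i, c i = 0 := by
  refine ⟨fun h j => ?_, fun h => by simp [h]⟩
  calc c j = inner' (∑ i, c i • F i) (F j) := by
        simp [inner'_sum_left, inner'_smul_left, hF]
    _ = 0 := by rw [h]; simp [inner']

/-! ### The structure constants of `λ²`, `λ⁴` and `Φ` -/

/-- The only term of `e^i`. -/
def e1Terms (i : Fin n) : SparseForm n := [({i}, 1)]

/-- The terms of the `G₂` form `φ`. -/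
def phi8Terms : SparseForm 8 :=
  [({1, 2, 3}, 1), ({1, 4, 5}, 1), ({1, 6, 7}, 1), ({2, 4, 6}, 1),
    ({2, 5, 7}, -1), ({3, 4, 7}, -1), ({3, 5, 6}, -1)]

/-- The terms of `*₇φ`. -/
def psi8Terms : SparseForm 8 :=
  [({4, 5, 6, 7}, 1), ({2, 3, 6, 7}, 1), ({2, 3, 4, 5}, 1), ({1, 3, 5, 7}, 1),
    ({1, 3, 4, 6}, -1), ({1, 2, 5, 6}, -1), ({1, 2, 4, 7}, -1)]

/-- The terms of the Cayley form `Φ`. -/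
def Phi8Terms : SparseForm 8 :=
  [({0, 1, 2, 3}, 1), ({0, 1, 4, 5}, 1), ({0, 1, 6, 7}, 1), ({0, 2, 4, 6}, 1),
    ({0, 2, 5, 7}, -1), ({0, 3, 4, 7}, -1), ({0, 3, 5, 6}, -1), ({1, 2, 4, 7}, -1),
    ({1, 2, 5, 6}, -1), ({1, 3, 4, 6}, -1), ({1, 3, 5, 7}, 1), ({2, 3, 4, 5}, 1),
    ({2, 3, 6, 7}, 1), ({4, 5, 6, 7}, 1)]

/-- The terms of `2 λ²(e^{μ+1})`. -/
def lambda2Terms : Fin 7 → SparseForm 8 := ![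
  [({0, 1}, 1), ({2, 3}, 1), ({4, 5}, 1), ({6, 7}, 1)],
  [({0, 2}, 1), ({1, 3}, -1), ({4, 6}, 1), ({5, 7}, -1)],
  [({0, 3}, 1), ({1, 2}, 1), ({4, 7}, -1), ({5, 6}, -1)],
  [({0, 4}, 1), ({1, 5}, -1), ({2, 6}, -1), ({3, 7}, 1)],
  [({0, 5}, 1), ({1, 4}, 1), ({2, 7}, 1), ({3, 6}, 1)],
  [({0, 6}, 1), ({1, 7}, -1), ({2, 4}, 1), ({3, 5}, -1)],
  [({0, 7}, 1), ({1, 6}, 1), ({2, 5}, -1), ({3, 4}, -1)]]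

/-- The terms of `√8 λ⁴(e^{μ+1})`. -/
def lambda4Terms : Fin 7 → SparseForm 8 := ![
  [({0, 2, 4, 7}, -1), ({0, 2, 5, 6}, -1), ({0, 3, 4, 6}, -1), ({0, 3, 5, 7}, 1),
    ({1, 2, 4, 6}, -1), ({1, 2, 5, 7}, 1), ({1, 3, 4, 7}, 1), ({1, 3, 5, 6}, 1)],
  [({0, 1, 4, 7}, 1), ({0, 1, 5, 6}, 1), ({0, 3, 4, 5}, 1), ({0, 3, 6, 7}, 1),
    ({1, 2, 4, 5}, 1), ({1, 2, 6, 7}, 1), ({2, 3, 4, 7}, 1), ({2, 3, 5, 6}, 1)],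
  [({0, 1, 4, 6}, 1), ({0, 1, 5, 7}, -1), ({0, 2, 4, 5}, -1), ({0, 2, 6, 7}, -1),
    ({1, 3, 4, 5}, 1), ({1, 3, 6, 7}, 1), ({2, 3, 4, 6}, 1), ({2, 3, 5, 7}, -1)],
  [({0, 1, 2, 7}, -1), ({0, 1, 3, 6}, -1), ({0, 2, 3, 5}, 1), ({0, 5, 6, 7}, 1),
    ({1, 2, 3, 4}, 1), ({1, 4, 6, 7}, 1), ({2, 4, 5, 7}, -1), ({3, 4, 5, 6}, -1)],
  [({0, 1, 2, 6}, -1), ({0, 1, 3, 7}, 1), ({0, 2, 3, 4}, -1), ({0, 4, 6, 7}, -1),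
    ({1, 2, 3, 5}, 1), ({1, 5, 6, 7}, 1), ({2, 4, 5, 6}, -1), ({3, 4, 5, 7}, 1)],
  [({0, 1, 2, 5}, 1), ({0, 1, 3, 4}, 1), ({0, 2, 3, 7}, 1), ({0, 4, 5, 7}, 1),
    ({1, 2, 3, 6}, 1), ({1, 4, 5, 6}, 1), ({2, 5, 6, 7}, 1), ({3, 4, 6, 7}, 1)],
  [({0, 1, 2, 4}, 1), ({0, 1, 3, 5}, -1), ({0, 2, 3, 6}, -1), ({0, 4, 5, 6}, -1),
    ({1, 2, 3, 7}, 1), ({1, 4, 5, 7}, 1), ({2, 4, 6, 7}, 1), ({3, 5, 6, 7}, -1)]]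

theorem isGrade_castForm_coeff {k : ℕ} {T : SparseForm n} (hT : ∀ p ∈ T, p.1.card = k) :
    isGrade k (castForm T.coeff : Form 𝕜 n) := by
  intro s hs
  have h_zero : T.coeff s = 0 := List.sum_eq_zero fun x hx => by
    obtain ⟨p, hp, rfl⟩ := List.mem_map.1 hx
    exact if_neg fun (h : p.1 = s) => hs (h ▸ hT p hp)
  rw [castForm, h_zero, Int.cast_zero]

theorem phi8_eq_castForm : (phi8 : Form 𝕜 8) = castForm phi8Terms.coeff := by
  funext s
  rw [castForm, phi8Terms]
  iterate 7 rw [SparseForm.coeff_cons_of_coeff_eq_zero (by decide)]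
  simp [phi8, SparseForm.coeff]

theorem psi8_eq_castForm : (psi8 : Form 𝕜 8) = castForm psi8Terms.coeff := by
  funext s
  rw [castForm, psi8Terms]
  iterate 7 rw [SparseForm.coeff_cons_of_coeff_eq_zero (by decide)]
  simp [psi8, SparseForm.coeff]

theorem e1_eq_castForm (i : Fin n) : (e1 i : Form 𝕜 n) = castForm (e1Terms i).coeff := by
  funext s
  simp [e1, e1Terms, castForm, SparseForm.coeff, eq_comm]

theorem extMul_phi8Terms_append_perm : (phi8Terms.extMul 0 ++ psi8Terms).Perm Phi8Terms := by
  decide +kernel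

theorem extMul_append_contract_perm_lambda2Terms (μ : Fin 7) :
    ((e1Terms μ.succ).extMul 0 ++ phi8Terms.contract μ.succ).Perm (lambda2Terms μ) := by
  decide +kernel +revert

theorem extMul_contract_append_neg_perm_lambda4Terms (μ : Fin 7) :
    ((psi8Terms.contract μ.succ).extMul 0 ++ (phi8Terms.extMul μ.succ).neg).Perm
      (lambda4Terms μ) := by
  decide +kernel +revert

theorem Phi8_eq_castForm : (Phi8 : Form 𝕜 8) = castForm Phi8Terms.coeff := by
  rw [Phi8, phi8_eq_castForm, psi8_eq_castForm, wedge_e1_castForm_coeff, ← castForm_coeff_append,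
    SparseForm.coeff_eq_of_perm extMul_phi8Terms_append_perm]

theorem lambda2_e1_succ (μ : Fin 7) :
    (lambda2 (e1 μ.succ) : Form 𝕜 8) = (2 : 𝕜)⁻¹ • castForm (lambda2Terms μ).coeff := by
  rw [lambda2, phi8_eq_castForm, iprod_sharp1_e1_castForm_coeff, e1_eq_castForm μ.succ,
    wedge_e1_castForm_coeff, ← castForm_coeff_append,
    SparseForm.coeff_eq_of_perm (extMul_append_contract_perm_lambda2Terms μ)]

theorem lambda4_e1_succ (μ : Fin 7) :
    (lambda4 (e1 μ.succ) : Form K 8) =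
      (algebraMap ℝ K (Real.sqrt 8))⁻¹ • castForm (lambda4Terms μ).coeff := by
  rw [lambda4, phi8_eq_castForm, psi8_eq_castForm, iprod_sharp1_e1_castForm_coeff,
    wedge_e1_castForm_coeff, wedge_e1_castForm_coeff, sub_eq_add_neg, ← castForm_coeff_neg,
    ← castForm_coeff_append,
    SparseForm.coeff_eq_of_perm (extMul_contract_append_neg_perm_lambda4Terms μ)]

/-! ### The projections `π²₇` and `π⁴₇` -/

/-- The coefficients of `v₀♭ ∧ ⋯ ∧ v_{k-1}♭`, i.e. the maximal minors of the matrix with rows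
`v i`. -/
def plucker {k : ℕ} (v : Fin k → Fin n → R) : Form R n := fun s =>
  if h : s.card = k then Matrix.det (Matrix.of fun i j => v i (s.orderIsoOfFin h j)) else 0

theorem evalForm_castForm_coeff {k : ℕ} (T : SparseForm n) (v : Fin k → Fin n → 𝕜) :
    evalForm (castForm T.coeff) v = T.pair (plucker v) :=
  T.sum_castForm_coeff_mul _

theorem evalForm_smul {k : ℕ} (c : 𝕜) (α : Form 𝕜 n) (v : Fin k → Fin n → 𝕜) :
    evalForm (c • α) v = c * evalForm α v :=
  inner'_smul_left c α (plucker v)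

theorem algebraMap_sqrt_eight_inv_ne_zero : (algebraMap ℝ K (Real.sqrt 8))⁻¹ ≠ 0 := by
  simp

set_option maxRecDepth 100000 in
theorem lambda4Terms_pair (μ ν : Fin 7) :
    (lambda4Terms μ).pair (lambda4Terms ν).coeff = if μ = ν then 8 else 0 := by
  revert μ ν
  decide +kernel

theorem lambda4_orthonormal (μ ν : Fin 7) :
    inner' (lambda4 (e1 μ.succ) : Form K 8) (lambda4 (e1 ν.succ)) = if μ = ν then 1 else 0 := by
  have h_sq : algebraMap ℝ K (Real.sqrt 8) * algebraMap ℝ K (Real.sqrt 8) = 8 := by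
    rw [← map_mul, Real.mul_self_sqrt (by norm_num), map_ofNat]
  have h_ne : algebraMap ℝ K (Real.sqrt 8) ≠ 0 := by simp
  rw [lambda4_e1_succ, lambda4_e1_succ, inner'_smul_left, inner'_smul_right,
    inner'_castForm_coeff_left, SparseForm.pair_castForm, lambda4Terms_pair]
  split_ifs
  · rw [Int.cast_ofNat, ← h_sq]
    field_simp
  · simp

theorem pi47_eq_zero_iff (β : Form K 8) : pi47 β = 0 ↔ ∀ μ, (lambda4Terms μ).pair β = 0 := by
  rw [pi47, sum_smul_eq_zero_iff_of_orthonormal lambda4_orthonormal]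
  simp only [inner'_comm β, lambda4_e1_succ, inner'_smul_left, inner'_castForm_coeff_left,
    mul_eq_zero, algebraMap_sqrt_eight_inv_ne_zero, false_or]

theorem tau4_eq_zero_iff (v : Fin 4 → Fin 8 → K) :
    tau4 v = 0 ↔ ∀ μ, (lambda4Terms μ).pair (plucker v) = 0 := by
  rw [tau4, sum_smul_eq_zero_iff_of_orthonormal lambda4_orthonormal]
  simp only [lambda4_e1_succ, evalForm_smul, evalForm_castForm_coeff, mul_eq_zero,
    algebraMap_sqrt_eight_inv_ne_zero, false_or]

set_option maxRecDepth 100000 in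
theorem lambda2Terms_pair (μ ν : Fin 7) :
    (lambda2Terms μ).pair (lambda2Terms ν).coeff = if μ = ν then 4 else 0 := by
  revert μ ν
  decide +kernel

theorem lambda2_orthonormal (h2 : (2 : 𝕜) ≠ 0) (μ ν : Fin 7) :
    inner' (lambda2 (e1 μ.succ) : Form 𝕜 8) (lambda2 (e1 ν.succ)) = if μ = ν then 1 else 0 := by
  rw [lambda2_e1_succ, lambda2_e1_succ, inner'_smul_left, inner'_smul_right,
    inner'_castForm_coeff_left, SparseForm.pair_castForm, lambda2Terms_pair]
  split_ifs
  · push_cast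
    field_simp
    norm_num
  · simp

theorem wedge_apply_sdiff (α β : Form 𝕜 n) (u : Finset (Fin n)) :
    wedge α β u = ∑ r ∈ u.powerset, signMerge (u \ r) r * α (u \ r) * β r := by
  refine Finset.sum_nbij' (u \ ·) (u \ ·) ?_ ?_ ?_ ?_ ?_ <;> intro s hs <;>
    simp_all

/-- The entries of the matrix of `α ↦ α + *₈(Φ ∧ α)` in the basis `e^s`. -/
def addStarWedgePhiMatrix (t r : Finset (Fin 8)) : ℤ :=
  (if r = t then 1 else 0) +
    if r ⊆ tᶜ then intSign tᶜ t * (intSign (tᶜ \ r) r * Phi8Terms.coeff (tᶜ \ r)) else 0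

set_option maxRecDepth 100000 in
theorem addStarWedgePhiMatrix_eq_sum {t r : Finset (Fin 8)} (ht : t.card = 2) (hr : r.card = 2) :
    addStarWedgePhiMatrix t r =
      ∑ μ, (lambda2Terms μ).coeff t * (lambda2Terms μ).coeff r := by
  have h_all : ∀ t ∈ Finset.powersetCard 2 (Finset.univ : Finset (Fin 8)),
      ∀ r ∈ Finset.powersetCard 2 (Finset.univ : Finset (Fin 8)), addStarWedgePhiMatrix t r =
        ∑ μ, (lambda2Terms μ).coeff t * (lambda2Terms μ).coeff r := by
    decide +kernel
  exact h_all t (by simp [ht]) r (by simp [hr])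

theorem add_hstar_wedge_Phi8_apply (α : Form 𝕜 8) (t : Finset (Fin 8)) :
    (α + hstar (wedge Phi8 α)) t = ∑ r, (addStarWedgePhiMatrix t r : 𝕜) * α r := by
  simp only [Pi.add_apply, hstar, wedge_apply_sdiff, signMerge_eq_intCast, Phi8_eq_castForm,
    castForm, addStarWedgePhiMatrix, Int.cast_add, add_mul, Finset.sum_add_distrib, Finset.mul_sum]
  congr 1
  · simp
  · simp only [Int.cast_ite, ite_mul, Int.cast_zero, zero_mul, Finset.sum_ite,
      Finset.sum_const_zero, add_zero]
    refine Finset.sum_congr (by ext; simp) fun r _ => by push_cast; ring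

theorem isGrade_smul {k : ℕ} (c : 𝕜) {α : Form 𝕜 n} (hα : isGrade k α) : isGrade k (c • α) :=
  fun s hs => by rw [Pi.smul_apply, hα s hs, smul_zero]

theorem isGrade_add {k : ℕ} {α β : Form 𝕜 n} (hα : isGrade k α) (hβ : isGrade k β) :
    isGrade k (α + β) :=
  fun s hs => by rw [Pi.add_apply, hα s hs, hβ s hs, add_zero]

theorem isGrade_sub {k : ℕ} {α β : Form 𝕜 n} (hα : isGrade k α) (hβ : isGrade k β) :
    isGrade k (α - β) :=
  fun s hs => by rw [Pi.sub_apply, hα s hs, hβ s hs, sub_zero]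

theorem isGrade_sum {k : ℕ} {ι : Type*} [Fintype ι] {F : ι → Form 𝕜 n}
    (hF : ∀ i, isGrade k (F i)) : isGrade k (∑ i, F i) :=
  fun s hs => by rw [Finset.sum_apply, Finset.sum_eq_zero fun i _ => hF i s hs]

theorem isGrade_wedge {p q : ℕ} {α β : Form 𝕜 n} (hα : isGrade p α) (hβ : isGrade q β) :
    isGrade (p + q) (wedge α β) := by
  intro u hu
  refine Finset.sum_eq_zero fun s hs => ?_
  by_cases hp : s.card = p
  · have hq : (u \ s).card ≠ q := by
      have h_card := Finset.card_sdiff_add_card_eq_card (Finset.mem_powerset.1 hs)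
      omega
    rw [hβ _ hq, mul_zero]
  · rw [hα _ hp, mul_zero, zero_mul]

theorem isGrade_hstar {k : ℕ} {α : Form 𝕜 n} (hα : isGrade k α) : isGrade (n - k) (hstar α) := by
  intro u hu
  have h_card : uᶜ.card ≠ k := by
    have h_compl := Finset.card_add_card_compl u
    rw [Fintype.card_fin] at h_compl
    omega
  rw [hstar, hα _ h_card, mul_zero]

theorem isGrade_Phi8 : isGrade 4 (Phi8 : Form 𝕜 8) :=
  Phi8_eq_castForm (𝕜 := 𝕜) ▸ isGrade_castForm_coeff (by decide)

theorem isGrade_lambda2 (μ : Fin 7) : isGrade 2 (lambda2 (e1 μ.succ) : Form 𝕜 8) :=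
  lambda2_e1_succ (𝕜 := 𝕜) μ ▸ isGrade_smul _ (isGrade_castForm_coeff (by revert μ; decide))

theorem isGrade_pi27 {α : Form 𝕜 8} (hα : isGrade 2 α) : isGrade 2 (pi27 α) :=
  isGrade_smul _ (isGrade_add hα (isGrade_hstar (isGrade_wedge isGrade_Phi8 hα)))

theorem pi27_eq_sum_lambda2 {α : Form 𝕜 8} (hα : isGrade 2 α) :
    pi27 α = ∑ μ : Fin 7, inner' (lambda2 (e1 μ.succ)) α • lambda2 (e1 μ.succ) := by
  funext t
  by_cases ht : t.card = 2
  · have h_row (r : Finset (Fin 8)) : (addStarWedgePhiMatrix t r : 𝕜) * α r =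
        ∑ μ, (castForm (lambda2Terms μ).coeff t : 𝕜) *
          (castForm (lambda2Terms μ).coeff r * α r) := by
      by_cases hr : r.card = 2
      · simp [addStarWedgePhiMatrix_eq_sum ht hr, Finset.sum_mul, castForm, mul_assoc]
      · simp [hα r hr]
    rw [pi27, Pi.smul_apply, add_hstar_wedge_Phi8_apply, Finset.sum_congr rfl fun r _ => h_row r,
      Finset.sum_comm, smul_eq_mul, Finset.mul_sum, Finset.sum_apply]
    refine Finset.sum_congr rfl fun μ _ => ?_
    rw [← Finset.mul_sum, SparseForm.sum_castForm_coeff_mul, lambda2_e1_succ, inner'_smul_left,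
      inner'_castForm_coeff_left, Pi.smul_apply, Pi.smul_apply, smul_eq_mul, smul_eq_mul,
      show (4 : 𝕜) = 2 * 2 by norm_num, mul_inv]
    ring
  · rw [isGrade_pi27 hα t ht, isGrade_sum (fun μ => isGrade_smul _ (isGrade_lambda2 μ)) t ht]

theorem pi27_eq_zero_iff (h2 : (2 : 𝕜) ≠ 0) {α : Form 𝕜 8} (hα : isGrade 2 α) :
    pi27 α = 0 ↔ ∀ μ, (lambda2Terms μ).pair α = 0 := by
  rw [pi27_eq_sum_lambda2 hα, sum_smul_eq_zero_iff_of_orthonormal (lambda2_orthonormal h2)]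
  simp [lambda2_e1_succ, inner'_smul_left, inner'_castForm_coeff_left, h2]

/-! ### Powers of a 2-form -/

section WedgePowers

variable {k : ℕ}

/-- The restriction of a form on `ℝⁿ` to the coordinate subspace spanned by the `e_{g i}`. -/
def restrict (g : Fin k ↪o Fin n) (α : Form 𝕜 n) : Form 𝕜 k := fun s => α (s.map g.toEmbedding)

theorem intSign_map (g : Fin k ↪o Fin n) (s t : Finset (Fin k)) :
    intSign (s.map g.toEmbedding) (t.map g.toEmbedding) = intSign s t := by
  have h_inversions : (s.map g.toEmbedding ×ˢ t.map g.toEmbedding).filter (fun p => p.2 < p.1) =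
      ((s ×ˢ t).filter fun p => p.2 < p.1).map (g.toEmbedding.prodMap g.toEmbedding) := by
    rw [← Finset.prodMap_map_product, Finset.filter_map]
    congr 2
    ext p
    exact g.lt_iff_lt
  rw [intSign, h_inversions, Finset.card_map, intSign]

theorem restrict_wedge (g : Fin k ↪o Fin n) (α β : Form 𝕜 n) :
    restrict g (wedge α β) = wedge (restrict g α) (restrict g β) := by
  funext u
  symm
  refine Finset.sum_bij (fun s _ => s.map g.toEmbedding) ?_ ?_ ?_ ?_
  · intro s hs
    simpa using hs
  · intro s _ t _ h
    exact Finset.map_injective _ h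
  · intro t ht
    obtain ⟨s, hs, rfl⟩ := Finset.subset_map_iff.1 (Finset.mem_powerset.1 ht)
    exact ⟨s, by simpa using hs, rfl⟩
  · intro s _
    simp only [restrict, ← Finset.map_sdiff, signMerge_eq_intCast, intSign_map]

theorem isGrade_restrict (g : Fin k ↪o Fin n) {d : ℕ} {α : Form 𝕜 n} (hα : isGrade d α) :
    isGrade d (restrict g α) :=
  fun s hs => hα _ (by rwa [Finset.card_map])

/-- Laplace expansion, with the `(k, l)`-shuffles of `u` and their signs listed explicitly. -/
theorem wedge_apply_eq_sum_shuffles {α : Form 𝕜 n} (hα : isGrade k α) (β : Form 𝕜 n)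
    {u : Finset (Fin n)} {L : List (Finset (Fin n) × Finset (Fin n) × ℤ)}
    (hL : (u.powersetCard k).val.map (fun s => (s, u \ s, intSign s (u \ s))) = L) :
    wedge α β u = (L.map fun p => (p.2.2 : 𝕜) * α p.1 * β p.2.1).sum := by
  rw [← Multiset.sum_coe, ← Multiset.map_coe, ← hL, Multiset.map_map]
  symm
  refine Finset.sum_subset_zero_on_sdiff (fun s hs => ?_) (fun s hs => ?_) (fun s _ => ?_)
  · exact Finset.mem_powerset.2 (Finset.mem_powersetCard.1 hs).1
  · rw [hα s fun h => by simp_all [Finset.mem_powersetCard], mul_zero, zero_mul]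
  · rw [signMerge_eq_intCast]; rfl

/-- The shuffles of `{0, 1, 2, 3}` into two pairs, with their signs. -/
def shuffles22 : List (Finset (Fin 4) × Finset (Fin 4) × ℤ) :=
  [({0, 1}, {2, 3}, 1), ({0, 2}, {1, 3}, -1), ({0, 3}, {1, 2}, 1),
    ({1, 2}, {0, 3}, 1), ({1, 3}, {0, 2}, -1), ({2, 3}, {0, 1}, 1)]

/-- The shuffles of `{0, …, 5}` into a pair and a quadruple, with their signs. -/
def shuffles24 : List (Finset (Fin 6) × Finset (Fin 6) × ℤ) :=
  [({0, 1}, {2, 3, 4, 5}, 1), ({0, 2}, {1, 3, 4, 5}, -1), ({0, 3}, {1, 2, 4, 5}, 1),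
    ({0, 4}, {1, 2, 3, 5}, -1), ({0, 5}, {1, 2, 3, 4}, 1), ({1, 2}, {0, 3, 4, 5}, 1),
    ({1, 3}, {0, 2, 4, 5}, -1), ({1, 4}, {0, 2, 3, 5}, 1), ({1, 5}, {0, 2, 3, 4}, -1),
    ({2, 3}, {0, 1, 4, 5}, 1), ({2, 4}, {0, 1, 3, 5}, -1), ({2, 5}, {0, 1, 3, 4}, 1),
    ({3, 4}, {0, 1, 2, 5}, 1), ({3, 5}, {0, 1, 2, 4}, -1), ({4, 5}, {0, 1, 2, 3}, 1)]

theorem wedge_sq_univ {α : Form 𝕜 4} (hα : isGrade 2 α) :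
    wedge α α Finset.univ =
      2 * (α {0, 1} * α {2, 3} - α {0, 2} * α {1, 3} + α {0, 3} * α {1, 2}) := by
  rw [wedge_apply_eq_sum_shuffles hα α (L := shuffles22) (by decide +kernel)]
  simp [shuffles22]
  ring

theorem strictMono_vec4 {i j k l : Fin n} (hij : i < j) (hjk : j < k) (hkl : k < l) :
    StrictMono ![i, j, k, l] := by
  rw [Fin.strictMono_iff_lt_succ]
  intro a
  fin_cases a <;> simpa

theorem wedge_sq_apply {α : Form 𝕜 n} (hα : isGrade 2 α) {i j k l : Fin n}
    (hij : i < j) (hjk : j < k) (hkl : k < l) :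
    wedge α α {i, j, k, l} =
      2 * (α {i, j} * α {k, l} - α {i, k} * α {j, l} + α {i, l} * α {j, k}) := by
  let g := OrderEmbedding.ofStrictMono ![i, j, k, l] (strictMono_vec4 hij hjk hkl)
  have h_univ : Finset.univ.map g.toEmbedding = {i, j, k, l} := by
    rw [show (Finset.univ : Finset (Fin 4)) = {0, 1, 2, 3} by decide]
    simp [Finset.map_insert, g]
  have h_restrict := congrFun (restrict_wedge g α α) Finset.univ
  rw [wedge_sq_univ (isGrade_restrict g hα), restrict, h_univ] at h_restrict
  simpa [restrict, Finset.map_insert, g] using h_restrict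

theorem wedge_cube_univ {α : Form 𝕜 6} (hα : isGrade 2 α) :
    wedge α (wedge α α) Finset.univ = 6 * (
      α {0, 1} * (α {2, 3} * α {4, 5} - α {2, 4} * α {3, 5} + α {2, 5} * α {3, 4})
      - α {0, 2} * (α {1, 3} * α {4, 5} - α {1, 4} * α {3, 5} + α {1, 5} * α {3, 4})
      + α {0, 3} * (α {1, 2} * α {4, 5} - α {1, 4} * α {2, 5} + α {1, 5} * α {2, 4})
      - α {0, 4} * (α {1, 2} * α {3, 5} - α {1, 3} * α {2, 5} + α {1, 5} * α {2, 3})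
      + α {0, 5} * (α {1, 2} * α {3, 4} - α {1, 3} * α {2, 4} + α {1, 4} * α {2, 3})) := by
  rw [wedge_apply_eq_sum_shuffles hα _ (L := shuffles24) (by decide +kernel)]
  simp [shuffles24, wedge_sq_apply hα]
  ring

theorem wedge_cube_apply {α : Form 𝕜 n} (hα : isGrade 2 α) {a b c d e f : Fin n}
    (hab : a < b) (hbc : b < c) (hcd : c < d) (hde : d < e) (hef : e < f) :
    wedge α (wedge α α) {a, b, c, d, e, f} = 6 * (
      α {a, b} * (α {c, d} * α {e, f} - α {c, e} * α {d, f} + α {c, f} * α {d, e})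
      - α {a, c} * (α {b, d} * α {e, f} - α {b, e} * α {d, f} + α {b, f} * α {d, e})
      + α {a, d} * (α {b, c} * α {e, f} - α {b, e} * α {c, f} + α {b, f} * α {c, e})
      - α {a, e} * (α {b, c} * α {d, f} - α {b, d} * α {c, f} + α {b, f} * α {c, d})
      + α {a, f} * (α {b, c} * α {d, e} - α {b, d} * α {c, e} + α {b, e} * α {c, d})) := by
  let g : Fin 6 ↪o Fin n := OrderEmbedding.ofStrictMono ![a, b, c, d, e, f] <| by
    rw [Fin.strictMono_iff_lt_succ]
    intro i
    fin_cases i <;> simpa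
  have h_univ : Finset.univ.map g.toEmbedding = {a, b, c, d, e, f} := by
    rw [show (Finset.univ : Finset (Fin 6)) = {0, 1, 2, 3, 4, 5} by decide]
    simp [Finset.map_insert, g]
  have h_restrict := congrFun (restrict_wedge g α (wedge α α)) Finset.univ
  rw [restrict_wedge g α α, wedge_cube_univ (isGrade_restrict g hα), restrict, h_univ] at h_restrict
  simpa [restrict, Finset.map_insert, g] using h_restrict

end WedgePowers

/-! ### Cross products on `ℝ⁸` -/

theorem plucker_map {k : ℕ} (g : Fin k ↪o Fin n) (v : Fin k → Fin n → R) :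
    plucker v (Finset.univ.map g.toEmbedding) = Matrix.det (Matrix.of fun i j => v i (g j)) := by
  have h_card : (Finset.univ.map g.toEmbedding).card = k := by simp
  have h_order (j : Fin k) : (Finset.univ.map g.toEmbedding).orderEmbOfFin h_card j = g j :=
    (congrFun (Finset.orderEmbOfFin_unique h_card (fun x => by simp) g.strictMono) j).symm
  rw [plucker, dif_pos h_card]
  simp only [Finset.coe_orderIsoOfFin_apply, h_order]

theorem orderEmbOfFin_pair {i j : Fin n} (hij : i < j) :
    ⇑(({i, j} : Finset (Fin n)).orderEmbOfFin (Finset.card_pair hij.ne)) = ![i, j] := by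
  refine (Finset.orderEmbOfFin_unique _ (fun a => ?_) ?_).symm
  · fin_cases a <;> simp
  · rw [Fin.strictMono_iff_lt_succ]
    intro a
    fin_cases a
    simpa

theorem plucker_pair (v : Fin 2 → Fin n → R) {i j : Fin n} (hij : i < j) :
    plucker v {i, j} = v 0 i * v 1 j - v 0 j * v 1 i := by
  rw [plucker, dif_pos (Finset.card_pair hij.ne), Matrix.det_fin_two]
  simp [orderEmbOfFin_pair hij]

theorem det_fin_four (M : Matrix (Fin 4) (Fin 4) R) :
    M.det =
      (M 0 0 * M 1 1 - M 0 1 * M 1 0) * (M 2 2 * M 3 3 - M 2 3 * M 3 2)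
      - (M 0 0 * M 1 2 - M 0 2 * M 1 0) * (M 2 1 * M 3 3 - M 2 3 * M 3 1)
      + (M 0 0 * M 1 3 - M 0 3 * M 1 0) * (M 2 1 * M 3 2 - M 2 2 * M 3 1)
      + (M 0 1 * M 1 2 - M 0 2 * M 1 1) * (M 2 0 * M 3 3 - M 2 3 * M 3 0)
      - (M 0 1 * M 1 3 - M 0 3 * M 1 1) * (M 2 0 * M 3 2 - M 2 2 * M 3 0)
      + (M 0 2 * M 1 3 - M 0 3 * M 1 2) * (M 2 0 * M 3 1 - M 2 1 * M 3 0) := by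
  rw [Matrix.det_succ_row_zero]
  simp [Fin.sum_univ_succ, Matrix.det_fin_three, Fin.succAbove]
  ring

theorem plucker_quadruple (v : Fin 4 → Fin n → R) {i j k l : Fin n}
    (hij : i < j) (hjk : j < k) (hkl : k < l) :
    plucker v {i, j, k, l} =
      (v 0 i * v 1 j - v 0 j * v 1 i) * (v 2 k * v 3 l - v 2 l * v 3 k)
      - (v 0 i * v 1 k - v 0 k * v 1 i) * (v 2 j * v 3 l - v 2 l * v 3 j)
      + (v 0 i * v 1 l - v 0 l * v 1 i) * (v 2 j * v 3 k - v 2 k * v 3 j)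
      + (v 0 j * v 1 k - v 0 k * v 1 j) * (v 2 i * v 3 l - v 2 l * v 3 i)
      - (v 0 j * v 1 l - v 0 l * v 1 j) * (v 2 i * v 3 k - v 2 k * v 3 i)
      + (v 0 k * v 1 l - v 0 l * v 1 k) * (v 2 i * v 3 j - v 2 j * v 3 i) := by
  let g := OrderEmbedding.ofStrictMono ![i, j, k, l] (strictMono_vec4 hij hjk hkl)
  have h_univ : Finset.univ.map g.toEmbedding = {i, j, k, l} := by
    rw [show (Finset.univ : Finset (Fin 4)) = {0, 1, 2, 3} by decide]
    simp [Finset.map_insert, g]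
  rw [← h_univ, plucker_map, det_fin_four]
  simp [g]

/-- The twofold cross product on `ℝ⁸` with values in `ℝ⁷`, whose components are the 2-forms
`2 λ²(e^{μ+1})`. -/
def cross (a b : Fin 8 → R) (μ : Fin 7) : R := (lambda2Terms μ).pair (plucker ![a, b])

/-- The value `Φ(v₀, v₁, v₂, v₃)` of the Cayley form. -/
def cayley (v : Fin 4 → Fin 8 → R) : R := Phi8Terms.pair (plucker v)

/-- The imaginary part of the fourfold cross product, whose components are the 4-forms
`√8 λ⁴(e^{μ+1})`. A linearly independent frame spans a Cayley plane exactly when it vanishes. -/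
def fourfoldCross (v : Fin 4 → Fin 8 → R) (μ : Fin 7) : R := (lambda4Terms μ).pair (plucker v)

/-- The triple cross product, the vector with `⟨a, tripleCross b c d⟩ = Φ(a, b, c, d)`. -/
def tripleCross (b c d : Fin 8 → R) (k : Fin 8) : R := cayley ![Pi.single k 1, b, c, d]

theorem cayley_eq_dotProduct_tripleCross (a b c d : Fin 8 → R) :
    cayley ![a, b, c, d] = a ⬝ᵥ tripleCross b c d := by
  simp [cayley, tripleCross, Phi8Terms, SparseForm.pair, plucker_quadruple, dotProduct,
    Fin.sum_univ_succ, Pi.single_apply]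
  ring

theorem cross_dotProduct_cross (a b c d : Fin 8 → R) :
    cross a b ⬝ᵥ cross c d =
      (a ⬝ᵥ c) * (b ⬝ᵥ d) - (a ⬝ᵥ d) * (b ⬝ᵥ c) + cayley ![a, b, c, d] := by
  simp [cayley, cross, Phi8Terms, lambda2Terms, SparseForm.pair, plucker_quadruple, plucker_pair,
    dotProduct, Fin.sum_univ_succ]
  ring

set_option maxHeartbeats 4000000 in
-- seven polynomial identities in 32 variables, of degree 4
theorem fourfoldCross_eq (a b c d : Fin 8 → R) :
    fourfoldCross ![a, b, c, d] = cross a (tripleCross b c d) +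
      ((a ⬝ᵥ b) • cross c d + (a ⬝ᵥ c) • cross d b + (a ⬝ᵥ d) • cross b c) := by
  funext μ
  fin_cases μ <;>
  · simp [cayley, fourfoldCross, tripleCross, cross, Phi8Terms, lambda2Terms, lambda4Terms,
      SparseForm.pair, plucker_quadruple, plucker_pair, dotProduct, Fin.sum_univ_succ]
    ring

/-! ### Frames of Cayley planes -/

theorem plucker_eq_zero_of_eq {k : ℕ} {v : Fin k → Fin n → R} {i j : Fin k} (hij : i ≠ j)
    (h : v i = v j) : plucker v = 0 := by
  funext s
  rw [plucker]
  split_ifs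
  · exact Matrix.det_zero_of_row_eq hij (by funext l; simp [h])
  · rfl

theorem plucker_comp {k : ℕ} (v : Fin k → Fin n → R) (p : Fin k → Fin k) :
    plucker (v ∘ p) = Matrix.det ((1 : Matrix (Fin k) (Fin k) R).submatrix p id) • plucker v := by
  funext s
  rw [Pi.smul_apply, plucker, plucker]
  split_ifs
  · rw [smul_eq_mul, ← Matrix.det_mul]
    congr 1
    ext i j
    simp [Matrix.mul_apply, Matrix.one_apply]
  · rw [smul_zero]

theorem cayley_eq_zero_of_eq {v : Fin 4 → Fin 8 → R} {i j : Fin 4} (hij : i ≠ j) (h : v i = v j) :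
    cayley v = 0 := by
  simp [cayley, plucker_eq_zero_of_eq hij h, SparseForm.pair]

theorem cayley_comp (v : Fin 4 → Fin 8 → R) (p : Fin 4 → Fin 4) :
    cayley (v ∘ p) = Matrix.det ((1 : Matrix (Fin 4) (Fin 4) R).submatrix p id) * cayley v := by
  rw [cayley, plucker_comp]
  simp [cayley, SparseForm.pair, ← List.sum_map_mul_left, mul_left_comm]

theorem cross_swap (a b : Fin 8 → R) : cross b a = -cross a b := by
  funext μ
  fin_cases μ <;>
  · simp [cross, lambda2Terms, SparseForm.pair, plucker_pair]
    ring

theorem fourfoldCross_eq_zero_of_eq {v : Fin 4 → Fin 8 → R} {i j : Fin 4} (hij : i ≠ j)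
    (h : v i = v j) : fourfoldCross v = 0 := by
  funext μ
  simp [fourfoldCross, plucker_eq_zero_of_eq hij h, SparseForm.pair]

theorem tripleCross_dotProduct_self (b c d : Fin 8 → R) :
    tripleCross b c d ⬝ᵥ tripleCross b c d =
      (b ⬝ᵥ b) * ((c ⬝ᵥ c) * (d ⬝ᵥ d) - (c ⬝ᵥ d) ^ 2)
      - (b ⬝ᵥ c) * ((b ⬝ᵥ c) * (d ⬝ᵥ d) - (b ⬝ᵥ d) * (c ⬝ᵥ d))
      + (b ⬝ᵥ d) * ((b ⬝ᵥ c) * (c ⬝ᵥ d) - (b ⬝ᵥ d) * (c ⬝ᵥ c)) := by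
  set P := tripleCross b c d with hP
  have h_orth_c : P ⬝ᵥ c = 0 := by
    rw [dotProduct_comm, hP, ← cayley_eq_dotProduct_tripleCross]
    exact cayley_eq_zero_of_eq (i := 0) (j := 2) (by decide) rfl
  have h_orth_d : P ⬝ᵥ d = 0 := by
    rw [dotProduct_comm, hP, ← cayley_eq_dotProduct_tripleCross]
    exact cayley_eq_zero_of_eq (i := 0) (j := 3) (by decide) rfl
  have h_cross : cross P b =
      (b ⬝ᵥ b) • cross c d + (b ⬝ᵥ c) • cross d b + (b ⬝ᵥ d) • cross b c := by
    have h_fourfold := fourfoldCross_eq b b c d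
    rw [fourfoldCross_eq_zero_of_eq (i := 0) (j := 1) (by decide) rfl] at h_fourfold
    rw [cross_swap b P, neg_eq_of_add_eq_zero_right h_fourfold.symm]
  calc P ⬝ᵥ P = cross P b ⬝ᵥ cross c d := by
        rw [cross_dotProduct_cross, h_orth_c, h_orth_d, cayley_eq_dotProduct_tripleCross]
        ring
    _ = _ := by
        rw [h_cross]
        simp only [add_dotProduct, smul_dotProduct, smul_eq_mul, cross_dotProduct_cross]
        rw [cayley_eq_zero_of_eq (v := ![c, d, c, d]) (i := 0) (j := 2) (by decide) rfl,
          cayley_eq_zero_of_eq (v := ![d, b, c, d]) (i := 0) (j := 3) (by decide) rfl,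
          cayley_eq_zero_of_eq (v := ![b, c, c, d]) (i := 1) (j := 2) (by decide) rfl,
          dotProduct_comm d c]
        ring

/-- The matrix of inner products of a frame. -/
def gram {k : ℕ} (v : Fin k → Fin n → R) : Matrix (Fin k) (Fin k) R :=
  Matrix.of fun i j => v i ⬝ᵥ v j

theorem transpose_gram {k : ℕ} (v : Fin k → Fin n → R) : (gram v).transpose = gram v := by
  ext i j
  exact dotProduct_comm (v j) (v i)

theorem sq_cayley_eq_det_gram {v : Fin 4 → Fin 8 → R} (hv : fourfoldCross v = 0) :
    cayley v ^ 2 = (gram v).det := by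
  obtain ⟨a, b, c, d, rfl⟩ : ∃ a b c d, v = ![a, b, c, d] :=
    ⟨v 0, v 1, v 2, v 3, by funext i; fin_cases i <;> rfl⟩
  set P := tripleCross b c d with hP
  have h_cross : cross a P =
      -((a ⬝ᵥ b) • cross c d + (a ⬝ᵥ c) • cross d b + (a ⬝ᵥ d) • cross b c) :=
    eq_neg_of_add_eq_zero_left ((fourfoldCross_eq a b c d).symm.trans hv)
  have h_repeat₀₂ (x y z : Fin 8 → R) : cayley ![x, y, x, z] = 0 :=
    cayley_eq_zero_of_eq (i := 0) (j := 2) (by decide) rfl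
  have h_repeat₀₃ (x y z : Fin 8 → R) : cayley ![x, y, z, x] = 0 :=
    cayley_eq_zero_of_eq (i := 0) (j := 3) (by decide) rfl
  have h_repeat₁₂ (x y z : Fin 8 → R) : cayley ![x, y, y, z] = 0 :=
    cayley_eq_zero_of_eq (i := 1) (j := 2) (by decide) rfl
  have h_cayley : cayley ![a, b, c, d] ^ 2 = (a ⬝ᵥ a) * (P ⬝ᵥ P) - cross a P ⬝ᵥ cross a P := by
    rw [cross_dotProduct_cross, h_repeat₀₂, cayley_eq_dotProduct_tripleCross, dotProduct_comm P a]
    ring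
  rw [h_cayley, h_cross, hP, tripleCross_dotProduct_self, det_fin_four]
  simp only [neg_dotProduct, dotProduct_neg, add_dotProduct, dotProduct_add, smul_dotProduct,
    dotProduct_smul, smul_eq_mul, cross_dotProduct_cross, h_repeat₀₂,
    h_repeat₀₃, h_repeat₁₂]
  simp [gram, dotProduct_comm b a, dotProduct_comm c a, dotProduct_comm d a, dotProduct_comm c b,
    dotProduct_comm d b, dotProduct_comm d c]
  ring

/-! ### Anti-self-duality on a Cayley plane -/

theorem mat2_fin_four (β : Form 𝕜 4) :
    mat2 β = !![0, β {0, 1}, β {0, 2}, β {0, 3};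
      -β {0, 1}, 0, β {1, 2}, β {1, 3};
      -β {0, 2}, -β {1, 2}, 0, β {2, 3};
      -β {0, 3}, -β {1, 3}, -β {2, 3}, 0] := by
  ext i j
  fin_cases i <;> fin_cases j <;>
    simp [mat2, Finset.pair_comm (1 : Fin 4) 0, Finset.pair_comm (2 : Fin 4) 0,
      Finset.pair_comm (2 : Fin 4) 1, Finset.pair_comm (3 : Fin 4) 0,
      Finset.pair_comm (3 : Fin 4) 1, Finset.pair_comm (3 : Fin 4) 2]

theorem transpose_mat2 (β : Form 𝕜 n) : (mat2 β).transpose = -mat2 β := by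
  ext i j
  rcases lt_trichotomy i j with hij | rfl | hij
  · simp [mat2, hij, hij.not_gt, Finset.pair_comm j i]
  · simp [mat2]
  · simp [mat2, hij, hij.not_gt, Finset.pair_comm j i]

theorem hstar_fin_four (β : Form 𝕜 4) :
    hstar β {0, 1} = β {2, 3} ∧ hstar β {0, 2} = -β {1, 3} ∧ hstar β {0, 3} = β {1, 2} ∧
      hstar β {1, 2} = β {0, 3} ∧ hstar β {1, 3} = -β {0, 2} ∧ hstar β {2, 3} = β {0, 1} := by
  have h_compl : ({0, 1}ᶜ : Finset (Fin 4)) = {2, 3} ∧ ({0, 2}ᶜ : Finset (Fin 4)) = {1, 3} ∧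
      ({0, 3}ᶜ : Finset (Fin 4)) = {1, 2} ∧ ({1, 2}ᶜ : Finset (Fin 4)) = {0, 3} ∧
      ({1, 3}ᶜ : Finset (Fin 4)) = {0, 2} ∧ ({2, 3}ᶜ : Finset (Fin 4)) = {0, 1} := by decide
  have h_sign : intSign ({2, 3} : Finset (Fin 4)) {0, 1} = 1 ∧
      intSign ({1, 3} : Finset (Fin 4)) {0, 2} = -1 ∧
      intSign ({1, 2} : Finset (Fin 4)) {0, 3} = 1 ∧
      intSign ({0, 3} : Finset (Fin 4)) {1, 2} = 1 ∧
      intSign ({0, 2} : Finset (Fin 4)) {1, 3} = -1 ∧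
      intSign ({0, 1} : Finset (Fin 4)) {2, 3} = 1 := by decide
  simp [hstar, signMerge_eq_intCast, h_compl, h_sign]

set_option maxHeartbeats 1000000 in
-- sixteen cases, each a sum over pairs `k, l` of permutation signs
theorem sum_mat2_hstar_mul_cayley (β : Form 𝕜 4) (v : Fin 4 → Fin 8 → 𝕜) (i j : Fin 4) :
    ∑ k, ∑ l, mat2 (hstar β) k l * cayley ![v i, v j, v k, v l] =
      2 * cayley v * mat2 β i j := by
  have h_comp (k l : Fin 4) : ![v i, v j, v k, v l] = v ∘ ![i, j, k, l] := by
    funext a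
    fin_cases a <;> rfl
  simp only [h_comp, cayley_comp, det_fin_four, mat2_fin_four, hstar_fin_four, Fin.sum_univ_four,
    Matrix.submatrix_apply, Matrix.one_apply]
  fin_cases i <;> fin_cases j <;>
  · simp
    try ring

/-- Twice the vector with components `β ∧ σ_μ / e^{0123}`, where `σ_μ` is the 2-form on the
parameter space obtained by evaluating `2 λ²(e^{μ+1})` on pairs of vectors of the frame `v`. -/
def starPairing (β : Form 𝕜 4) (v : Fin 4 → Fin 8 → 𝕜) : Fin 7 → 𝕜 :=
  ∑ k, ∑ l, mat2 (hstar β) k l • cross (v k) (v l)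

theorem cross_dotProduct_starPairing (β : Form 𝕜 4) (v : Fin 4 → Fin 8 → 𝕜) (i j : Fin 4) :
    cross (v i) (v j) ⬝ᵥ starPairing β v =
      2 * (gram v * mat2 (hstar β) * gram v + cayley v • mat2 β) i j := by
  have h_symm (p q : Fin 4) : v p ⬝ᵥ v q = gram v p q := rfl
  have h_skew : (mat2 (hstar β)).transpose = -mat2 (hstar β) := transpose_mat2 _
  have h_sandwich (p q : Fin 4) : ∑ k, ∑ l, mat2 (hstar β) k l * (gram v p k * gram v q l) =
      (gram v * mat2 (hstar β) * gram v) p q := by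
    simp only [Matrix.mul_apply, Finset.sum_mul]
    rw [Finset.sum_comm]
    refine Finset.sum_congr rfl fun l _ => Finset.sum_congr rfl fun k _ => ?_
    rw [show gram v q l = gram v l q from dotProduct_comm (v q) (v l)]
    ring
  have h_swap : (gram v * mat2 (hstar β) * gram v) j i =
      -(gram v * mat2 (hstar β) * gram v) i j := by
    rw [← Matrix.transpose_apply (gram v * mat2 (hstar β) * gram v), Matrix.transpose_mul,
      Matrix.transpose_mul, h_skew, transpose_gram, neg_mul, mul_neg, Matrix.neg_apply, mul_assoc]
  have h_cross (k l : Fin 4) : cross (v i) (v j) ⬝ᵥ cross (v k) (v l) =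
      gram v i k * gram v j l - gram v j k * gram v i l + cayley ![v i, v j, v k, v l] := by
    rw [cross_dotProduct_cross, h_symm, h_symm, h_symm, h_symm]
    ring
  simp only [starPairing, dotProduct_sum, dotProduct_smul, smul_eq_mul, h_cross, mul_add, mul_sub,
    Finset.sum_add_distrib, Finset.sum_sub_distrib, sum_mat2_hstar_mul_cayley, h_sandwich, h_swap,
    Matrix.add_apply, Matrix.smul_apply]
  ring

theorem starPairing_eq_zero_iff (β : Form ℝ 4) (v : Fin 4 → Fin 8 → ℝ) :
    starPairing β v = 0 ↔ gram v * mat2 (hstar β) * gram v = -(cayley v • mat2 β) := by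
  constructor
  · intro h
    ext i j
    have h_ij := cross_dotProduct_starPairing β v i j
    rw [h, dotProduct_zero, Matrix.add_apply] at h_ij
    rw [Matrix.neg_apply]
    linarith
  · intro h
    rw [← dotProduct_self_eq_zero]
    nth_rewrite 1 [starPairing]
    simp only [sum_dotProduct, smul_dotProduct, cross_dotProduct_starPairing, h, neg_add_cancel,
      Matrix.zero_apply, mul_zero, smul_zero, Finset.sum_const_zero]

theorem eq_of_mat2_eq {α β : Form 𝕜 n} (hα : isGrade 2 α) (hβ : isGrade 2 β)
    (h : mat2 α = mat2 β) : α = β := by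
  funext s
  by_cases hs : s.card = 2
  · obtain ⟨i, j, hij, rfl⟩ := Finset.card_eq_two.mp hs
    wlog h_lt : i < j generalizing i j
    · rw [Finset.pair_comm]
      exact this j i hij.symm (by rwa [Finset.pair_comm]) (hij.lt_or_gt.resolve_left h_lt)
    simpa [mat2, h_lt] using congrFun (congrFun h i) j
  · rw [hα s hs, hβ s hs]

theorem mat2_smul (c : 𝕜) (α : Form 𝕜 n) : mat2 (c • α) = c • mat2 α := by
  ext i j
  simp [mat2]

theorem hstar_smul (c : 𝕜) (α : Form 𝕜 n) : hstar (c • α) = c • hstar α := by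
  funext s
  simp [hstar, mul_left_comm]

theorem hstar_hstar_fin_four {β : Form 𝕜 4} (hβ : isGrade 2 β) : hstar (hstar β) = β := by
  refine eq_of_mat2_eq (isGrade_hstar (isGrade_hstar hβ)) hβ ?_
  simp only [mat2_fin_four, hstar_fin_four, neg_neg]

theorem minor2_pair (H : Matrix (Fin 4) (Fin 4) ℝ) {i j k l : Fin 4} (hij : i < j) (hkl : k < l) :
    minor2 H {i, j} {k, l} = H i k * H j l - H i l * H j k := by
  rw [minor2, dif_pos (Finset.card_pair hij.ne), dif_pos (Finset.card_pair hkl.ne),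
    Matrix.det_fin_two]
  simp [orderEmbOfFin_pair hij, orderEmbOfFin_pair hkl]

/-- The 2-form on the dual space, `(i, j) ↦ ⟨e^{ij}, β⟩`, obtained from `β` by raising both indices
with the inverse Gram matrix `H`. -/
def raise (H : Matrix (Fin 4) (Fin 4) ℝ) (β : Form ℝ 4) : Form ℝ 4 := fun s => innerG2 H (indF s) β

theorem isGrade_raise (H : Matrix (Fin 4) (Fin 4) ℝ) (β : Form ℝ 4) : isGrade 2 (raise H β) := by
  intro s hs
  rw [raise, innerG2]
  refine Finset.sum_eq_zero fun u _ => Finset.sum_eq_zero fun t _ => ?_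
  by_cases hu : u = s
  · rw [hu, minor2, dif_neg hs, mul_zero]
  · simp [indF, hu]

theorem sum_eq_of_isGrade_two {g : Form 𝕜 4} (hg : isGrade 2 g) :
    ∑ s, g s = g {0, 1} + g {0, 2} + g {0, 3} + g {1, 2} + g {1, 3} + g {2, 3} := by
  have h_powerset : Finset.powersetCard 2 (Finset.univ : Finset (Fin 4)) =
      {{0, 1}, {0, 2}, {0, 3}, {1, 2}, {1, 3}, {2, 3}} := by decide
  rw [← Finset.sum_subset (Finset.subset_univ (Finset.powersetCard 2 Finset.univ)) fun s _ hs =>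
    hg s fun h => hs (by simp [h]), h_powerset]
  repeat rw [Finset.sum_insert (by decide)]
  rw [Finset.sum_singleton]
  ring

theorem mat2_raise (H : Matrix (Fin 4) (Fin 4) ℝ) {β : Form ℝ 4} (hβ : isGrade 2 β) :
    mat2 (raise H β) = H * mat2 β * H.transpose := by
  have h_raise {i j : Fin 4} (hij : i < j) :
      raise H β {i, j} = (H * mat2 β * H.transpose) i j := by
    have h_sum : raise H β {i, j} = ∑ t, β t * minor2 H {i, j} t := by
      simp [raise, innerG2, indF]
    rw [h_sum, sum_eq_of_isGrade_two fun t ht => by rw [hβ t ht, zero_mul]]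
    simp only [minor2_pair H hij, Fin.reduceLT, mat2_fin_four, Matrix.mul_apply, Fin.sum_univ_four,
      Matrix.transpose_apply]
    simp
    ring
  have h_skew : (H * mat2 β * H.transpose).transpose = -(H * mat2 β * H.transpose) := by
    rw [Matrix.transpose_mul, Matrix.transpose_mul, Matrix.transpose_transpose, transpose_mat2,
      neg_mul, mul_neg, mul_assoc]
  generalize H * mat2 β * H.transpose = M at h_raise h_skew
  have h_swap (i j : Fin 4) : M j i = -M i j := congrFun (congrFun h_skew i) j
  ext i j
  rcases lt_trichotomy i j with hij | rfl | hij
  · simp [mat2, hij, h_raise]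
  · simp only [mat2, Matrix.of_apply, lt_irrefl, if_false]
    linarith [h_swap i i]
  · simp only [mat2, Matrix.of_apply, hij, hij.not_gt, if_true, if_false]
    rw [Finset.pair_comm, h_raise hij, h_swap, neg_neg]

theorem starG_eq_smul_hstar_raise (G : Matrix (Fin 4) (Fin 4) ℝ) (ε : ℝ) (β : Form ℝ 4) :
    starG G ε β = (ε * √G.det) • hstar (raise G⁻¹ β) := by
  funext t
  simp only [starG, hstar, raise, Pi.smul_apply, smul_eq_mul]
  ring

theorem starG_eq_neg_iff {G : Matrix (Fin 4) (Fin 4) ℝ} (hG : G.det ≠ 0)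
    (hG_symm : G.transpose = G) (ε : ℝ) {β : Form ℝ 4} (hβ : isGrade 2 β) :
    starG G ε β = -β ↔ G * mat2 (hstar β) * G = -((ε * √G.det) • mat2 β) := by
  have h_unit : IsUnit G.det := hG.isUnit
  set c := ε * √G.det
  calc
    starG G ε β = -β ↔ c • hstar (raise G⁻¹ β) = (-1 : ℝ) • β := by
      rw [starG_eq_smul_hstar_raise, neg_one_smul]
    _ ↔ c • raise G⁻¹ β = (-1 : ℝ) • hstar β := by
      constructor <;> intro h
      · rw [← hstar_smul, ← h, hstar_smul, hstar_hstar_fin_four (isGrade_raise _ _)]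
      · rw [← hstar_smul, h, hstar_smul, hstar_hstar_fin_four hβ]
    _ ↔ c • (G⁻¹ * mat2 β * G⁻¹) = -mat2 (hstar β) := by
      have h_mat2 : mat2 (raise G⁻¹ β) = G⁻¹ * mat2 β * G⁻¹ := by
        rw [mat2_raise _ hβ, Matrix.transpose_nonsing_inv, hG_symm]
      constructor <;> intro h
      · rw [← h_mat2, ← mat2_smul, h, mat2_smul, neg_one_smul]
      · refine eq_of_mat2_eq (isGrade_smul _ (isGrade_raise _ _))
          (isGrade_smul _ (isGrade_hstar hβ)) ?_
        rw [mat2_smul, mat2_smul, h_mat2, h, neg_one_smul]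
    _ ↔ G * mat2 (hstar β) * G = -(c • mat2 β) := by
      have h_sandwich : G * (c • (G⁻¹ * mat2 β * G⁻¹)) * G = c • mat2 β := by
        rw [Matrix.mul_smul, Matrix.smul_mul, mul_assoc G⁻¹,
          Matrix.mul_nonsing_inv_cancel_left _ _ h_unit,
          Matrix.nonsing_inv_mul_cancel_right _ _ h_unit]
      have h_inj {M N : Matrix (Fin 4) (Fin 4) ℝ} : G * M * G = G * N * G ↔ M = N := by
        rw [((Matrix.isUnit_iff_isUnit_det G).mpr h_unit).mul_left_inj,
          ((Matrix.isUnit_iff_isUnit_det G).mpr h_unit).mul_right_inj]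
      rw [← h_inj, h_sandwich, mul_neg, neg_mul, eq_neg_iff_add_eq_zero, eq_neg_iff_add_eq_zero,
        add_comm]

theorem sign_mul_sqrt_sq (c : ℝ) : Real.sign c * √(c ^ 2) = c := by
  rw [Real.sqrt_sq_eq_abs]
  rcases lt_trichotomy c 0 with hc | rfl | hc
  · rw [Real.sign_of_neg hc, abs_of_neg hc, neg_one_mul, neg_neg]
  · simp
  · rw [Real.sign_of_pos hc, abs_of_pos hc, one_mul]

theorem starG_gram_eq_neg_iff {v : Fin 4 → Fin 8 → ℝ} (hv : fourfoldCross v = 0)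
    (h_det : (gram v).det ≠ 0) {β : Form ℝ 4} (hβ : isGrade 2 β) :
    starG (gram v) (Real.sign (cayley v)) β = -β ↔ starPairing β v = 0 := by
  rw [starG_eq_neg_iff h_det (transpose_gram v) _ hβ, starPairing_eq_zero_iff,
    ← sq_cayley_eq_det_gram hv, sign_mul_sqrt_sq]

/-! ### The curvature of the Fourier–Mukai transform -/

theorem isGrade_e1 (i : Fin n) : isGrade 1 (e1 i : Form 𝕜 n) :=
  fun _ hs => if_neg fun h => hs (by rw [h, Finset.card_singleton])

theorem intSign_singleton (i j : Fin n) : intSign {i} {j} = if j < i then -1 else 1 := by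
  split_ifs with h <;> simp [intSign, Finset.filter_singleton, h]

theorem wedge_e1_e1_apply (i j : Fin n) {p q : Fin n} (hpq : p < q) :
    (wedge (e1 i) (e1 j) : Form 𝕜 n) {p, q} =
      (if i = p ∧ j = q then 1 else 0) - (if i = q ∧ j = p then 1 else 0) := by
  rw [wedge_e1_apply]
  by_cases hp : i = p
  · have h_sdiff : ({p, q} : Finset (Fin n)) \ {p} = {q} := by
      rw [Finset.sdiff_singleton_eq_erase, Finset.erase_insert (by simpa using hpq.ne)]
    simp [hp, h_sdiff, intSign_singleton, hpq.not_gt, hpq.ne, e1, eq_comm (a := q)]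
  · by_cases hq : i = q
    · have h_sdiff : ({p, q} : Finset (Fin n)) \ {q} = {p} := by
        rw [Finset.pair_comm, Finset.sdiff_singleton_eq_erase,
          Finset.erase_insert (by simpa using hpq.ne')]
      by_cases hj : j = p <;>
        simp [hq, hj, h_sdiff, intSign_singleton, hpq, hpq.ne', e1, eq_comm (a := p)]
    · simp [hp, hq]

section TwoForm

variable {ι κ : Type*} [Fintype ι] [Fintype κ]

/-- The 2-form `Σ_{i,j} c_{ij} e^{u i} ∧ e^{w j}`. -/
def twoForm (u : ι → Fin n) (w : κ → Fin n) (c : ι → κ → 𝕜) : Form 𝕜 n :=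
  ∑ i, ∑ j, c i j • wedge (e1 (u i)) (e1 (w j))

theorem isGrade_twoForm (u : ι → Fin n) (w : κ → Fin n) (c : ι → κ → 𝕜) :
    isGrade 2 (twoForm u w c) :=
  isGrade_sum fun _ => isGrade_sum fun _ =>
    isGrade_smul _ (isGrade_wedge (isGrade_e1 _) (isGrade_e1 _))

theorem twoForm_apply (u : ι → Fin n) (w : κ → Fin n) (c : ι → κ → 𝕜) {p q : Fin n}
    (hpq : p < q) :
    twoForm u w c {p, q} = ∑ i, ∑ j, c i j *
      ((if u i = p ∧ w j = q then 1 else 0) - (if u i = q ∧ w j = p then 1 else 0)) := by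
  simp only [twoForm, Finset.sum_apply, Pi.smul_apply, smul_eq_mul, wedge_e1_e1_apply _ _ hpq]

theorem twoForm_id_apply (a : Fin n → Fin n → 𝕜) {p q : Fin n} (hpq : p < q) :
    twoForm id id a {p, q} = a p q - a q p := by
  simp [twoForm_apply id id a hpq, mul_sub, ite_and]

end TwoForm

/-- The tangent frame of a graph whose partial derivatives are `∂f^a/∂x^j = m j a`. -/
def graphFrame (m : Fin 4 → Fin 4 → ℝ) (j : Fin 4) : Fin 8 → ℝ :=
  Pi.single (xi j) 1 + ∑ a, m j a • Pi.single (yi a) 1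

theorem graphFrame_eq (m : Fin 4 → Fin 4 → ℝ) (j : Fin 4) :
    graphFrame m j = ![if j = 0 then 1 else 0, if j = 1 then 1 else 0, if j = 2 then 1 else 0,
      if j = 3 then 1 else 0, m j 0, m j 1, m j 2, m j 3] := by
  funext k
  fin_cases j <;> fin_cases k <;>
    simp [graphFrame, xi, yi, Fin.sum_univ_four]

theorem det_gram_graphFrame_pos (m : Fin 4 → Fin 4 → ℝ) : 0 < (gram (graphFrame m)).det := by
  have h_gram : gram (graphFrame m) = 1 + Matrix.of m * (Matrix.of m).conjTranspose := by
    ext i j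
    simp only [gram, graphFrame_eq, Matrix.of_apply, dotProduct, Fin.sum_univ_succ]
    fin_cases i <;> fin_cases j <;> simp [Matrix.mul_apply, Fin.sum_univ_succ]
  rw [h_gram]
  exact (Matrix.PosDef.one.add_posSemidef
    (Matrix.posSemidef_self_mul_conjTranspose (Matrix.of m))).det_pos

/-- The real 2-form `-√-1 F_∇` at a point where `∂A^j/∂x^i = a i j` and `∂f^a/∂x^j = m j a`. -/
def curvatureForm (a m : Fin 4 → Fin 4 → ℝ) : Form ℝ 8 := twoForm xi xi a + twoForm xi yi m

theorem isGrade_curvatureForm (a m : Fin 4 → Fin 4 → ℝ) : isGrade 2 (curvatureForm a m) :=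
  isGrade_add (isGrade_twoForm _ _ _) (isGrade_twoForm _ _ _)

theorem curvatureForm_apply (a m : Fin 4 → Fin 4 → ℝ) {p q : Fin 8} (hpq : p < q) :
    curvatureForm a m {p, q} = !![
      0, a 0 1 - a 1 0, a 0 2 - a 2 0, a 0 3 - a 3 0, m 0 0, m 0 1, m 0 2, m 0 3;
      0, 0, a 1 2 - a 2 1, a 1 3 - a 3 1, m 1 0, m 1 1, m 1 2, m 1 3;
      0, 0, 0, a 2 3 - a 3 2, m 2 0, m 2 1, m 2 2, m 2 3;
      0, 0, 0, 0, m 3 0, m 3 1, m 3 2, m 3 3;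
      0, 0, 0, 0, 0, 0, 0, 0;
      0, 0, 0, 0, 0, 0, 0, 0;
      0, 0, 0, 0, 0, 0, 0, 0;
      0, 0, 0, 0, 0, 0, 0, 0] p q := by
  have h_xi : xi 0 = 0 ∧ xi 1 = 1 ∧ xi 2 = 2 ∧ xi 3 = 3 := by decide
  have h_yi : yi 0 = 4 ∧ yi 1 = 5 ∧ yi 2 = 6 ∧ yi 3 = 7 := by decide
  rw [curvatureForm, Pi.add_apply, twoForm_apply _ _ _ hpq, twoForm_apply _ _ _ hpq]
  simp only [Fin.sum_univ_four, h_xi, h_yi]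
  fin_cases p <;> fin_cases q <;> first
    | exact absurd hpq (by decide)
    | (simp; try ring)

theorem SparseForm.pair_sub_smul (T : SparseForm n) (α β : Form R n) (c : R) :
    T.pair (α - c • β) = T.pair α - c * T.pair β := by
  induction T with
  | nil => simp [pair]
  | cons p T ih =>
    simp only [pair, List.map_cons, List.sum_cons, Pi.sub_apply, Pi.smul_apply,
      smul_eq_mul] at ih ⊢
    rw [ih]
    ring

/-- The adjoint of the Hodge star, applied to a sparse form. -/
def SparseForm.starAdjoint (T : SparseForm n) : SparseForm n :=
  T.map fun p => (p.1ᶜ, intSign p.1ᶜ p.1 * p.2)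

theorem SparseForm.pair_hstar (T : SparseForm n) (α : Form 𝕜 n) :
    T.pair (hstar α) = T.starAdjoint.pair α := by
  simp only [pair, starAdjoint, List.map_map]
  congr 1
  refine List.map_congr_left fun p _ => ?_
  simp only [hstar, signMerge_eq_intCast, Function.comp_apply, Int.cast_mul]
  ring

/-- The terms of `2 λ⁶(e^{μ+1})`, where `λ⁶ = *₈ λ²`. -/
def lambda6Terms : Fin 7 → SparseForm 8 := ![
  [({2, 3, 4, 5, 6, 7}, 1), ({0, 1, 4, 5, 6, 7}, 1), ({0, 1, 2, 3, 6, 7}, 1),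
    ({0, 1, 2, 3, 4, 5}, 1)],
  [({1, 3, 4, 5, 6, 7}, -1), ({0, 2, 4, 5, 6, 7}, 1), ({0, 1, 2, 3, 5, 7}, -1),
    ({0, 1, 2, 3, 4, 6}, 1)],
  [({1, 2, 4, 5, 6, 7}, 1), ({0, 3, 4, 5, 6, 7}, 1), ({0, 1, 2, 3, 5, 6}, -1),
    ({0, 1, 2, 3, 4, 7}, -1)],
  [({1, 2, 3, 5, 6, 7}, -1), ({0, 2, 3, 4, 6, 7}, 1), ({0, 1, 3, 4, 5, 7}, 1),
    ({0, 1, 2, 4, 5, 6}, -1)],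
  [({1, 2, 3, 4, 6, 7}, 1), ({0, 2, 3, 5, 6, 7}, 1), ({0, 1, 3, 4, 5, 6}, 1),
    ({0, 1, 2, 4, 5, 7}, 1)],
  [({1, 2, 3, 4, 5, 7}, -1), ({0, 2, 3, 4, 5, 6}, 1), ({0, 1, 3, 5, 6, 7}, -1),
    ({0, 1, 2, 4, 6, 7}, 1)],
  [({1, 2, 3, 4, 5, 6}, 1), ({0, 2, 3, 4, 5, 7}, 1), ({0, 1, 3, 4, 6, 7}, -1),
    ({0, 1, 2, 5, 6, 7}, -1)]]

theorem starAdjoint_lambda2Terms (μ : Fin 7) : (lambda2Terms μ).starAdjoint = lambda6Terms μ := by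
  decide +kernel +revert

theorem lambda4Terms_pair_curvatureForm_sq (a m : Fin 4 → Fin 4 → ℝ) (μ : Fin 7) :
    (lambda4Terms μ).pair (wedge (curvatureForm a m) (curvatureForm a m)) =
      if μ < 3 then -2 * fourfoldCross (graphFrame m) μ
      else starPairing (twoForm id id a) (graphFrame m) μ := by
  fin_cases μ <;>
  · simp [SparseForm.pair, lambda4Terms, lambda2Terms, wedge_sq_apply (isGrade_curvatureForm a m),
      curvatureForm_apply, starPairing, fourfoldCross, cross, plucker_quadruple, plucker_pair,
      graphFrame_eq, mat2_fin_four, hstar_fin_four, twoForm_id_apply, Fin.sum_univ_succ]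
    try ring

theorem lambda2Terms_pair_curvatureForm (a m : Fin 4 → Fin 4 → ℝ) (μ : Fin 7) :
    (lambda2Terms μ).pair (curvatureForm a m - (6 : ℝ)⁻¹ • hstar (wedge (curvatureForm a m)
        (wedge (curvatureForm a m) (curvatureForm a m)))) =
      if μ < 3 then 2⁻¹ * starPairing (twoForm id id a) (graphFrame m) μ
      else -fourfoldCross (graphFrame m) μ := by
  rw [SparseForm.pair_sub_smul, SparseForm.pair_hstar, starAdjoint_lambda2Terms]
  fin_cases μ <;>
  · simp [SparseForm.pair, lambda4Terms, lambda2Terms, lambda6Terms,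
      wedge_cube_apply (isGrade_curvatureForm a m),
      curvatureForm_apply, starPairing, fourfoldCross, cross, plucker_quadruple, plucker_pair,
      graphFrame_eq, mat2_fin_four, hstar_fin_four, twoForm_id_apply, Fin.sum_univ_succ]
    try ring

/-- The complex form `c α` for a real form `α`. -/
def complexMul (c : ℂ) (α : Form ℝ n) : Form ℂ n := fun s => c * (α s : ℂ)

theorem complexMul_add (c : ℂ) (α β : Form ℝ n) :
    complexMul c (α + β) = complexMul c α + complexMul c β := by
  funext s
  simp [complexMul, mul_add]

theorem isGrade_complexMul {k : ℕ} (c : ℂ) {α : Form ℝ n} (hα : isGrade k α) :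
    isGrade k (complexMul c α) :=
  fun s hs => by rw [complexMul, hα s hs, Complex.ofReal_zero, mul_zero]

theorem wedge_complexMul (c d : ℂ) (α β : Form ℝ n) :
    wedge (complexMul c α) (complexMul d β) = complexMul (c * d) (wedge α β) := by
  funext s
  simp only [complexMul, wedge, signMerge_eq_intCast, Complex.ofReal_sum, Finset.mul_sum]
  refine Finset.sum_congr rfl fun _ _ => ?_
  push_cast
  ring

theorem hstar_complexMul (c : ℂ) (α : Form ℝ n) :
    hstar (complexMul c α) = complexMul c (hstar α) := by
  funext s
  simp only [complexMul, hstar, signMerge_eq_intCast]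
  push_cast
  ring

theorem SparseForm.pair_complexMul (T : SparseForm n) (c : ℂ) (α : Form ℝ n) :
    T.pair (complexMul c α) = c * (T.pair α : ℝ) := by
  induction T with
  | nil => simp [pair]
  | cons p T ih =>
    simp only [pair, List.map_cons, List.sum_cons] at ih ⊢
    rw [ih]
    simp only [complexMul]
    push_cast
    ring

theorem pi47_complexMul_eq_zero_iff {c : ℂ} (hc : c ≠ 0) (β : Form ℝ 8) :
    pi47 (complexMul c β) = 0 ↔ ∀ μ, (lambda4Terms μ).pair β = 0 := by
  simp [pi47_eq_zero_iff, SparseForm.pair_complexMul, hc]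

theorem pi27_complexMul_eq_zero_iff {c : ℂ} (hc : c ≠ 0) {α : Form ℝ 8} (hα : isGrade 2 α) :
    pi27 (complexMul c α) = 0 ↔ ∀ μ, (lambda2Terms μ).pair α = 0 := by
  simp [pi27_eq_zero_iff two_ne_zero (isGrade_complexMul c hα), SparseForm.pair_complexMul, hc]

theorem complexMul_I_add_cube (ω : Form ℝ n) :
    complexMul Complex.I ω + (6 : ℂ)⁻¹ • hstar (wedge (complexMul Complex.I ω)
        (wedge (complexMul Complex.I ω) (complexMul Complex.I ω))) =
      complexMul Complex.I (ω - (6 : ℝ)⁻¹ • hstar (wedge ω (wedge ω ω))) := by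
  rw [wedge_complexMul, wedge_complexMul, hstar_complexMul, Complex.I_mul_I]
  funext s
  simp only [complexMul, Pi.add_apply, Pi.sub_apply, Pi.smul_apply, smul_eq_mul]
  push_cast
  ring

theorem pi47_curvature_eq_zero_iff (a m : Fin 4 → Fin 4 → ℝ) :
    pi47 (wedge (complexMul Complex.I (curvatureForm a m))
        (complexMul Complex.I (curvatureForm a m))) = 0 ↔
      ∀ μ, if μ < 3 then fourfoldCross (graphFrame m) μ = 0
        else starPairing (twoForm id id a) (graphFrame m) μ = 0 := by
  rw [wedge_complexMul, pi47_complexMul_eq_zero_iff (by simp)]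
  refine forall_congr' fun μ => ?_
  rw [lambda4Terms_pair_curvatureForm_sq]
  split_ifs <;> simp

theorem pi27_curvature_eq_zero_iff (a m : Fin 4 → Fin 4 → ℝ) :
    pi27 (complexMul Complex.I (curvatureForm a m) + (6 : ℂ)⁻¹ •
        hstar (wedge (complexMul Complex.I (curvatureForm a m))
          (wedge (complexMul Complex.I (curvatureForm a m))
            (complexMul Complex.I (curvatureForm a m))))) = 0 ↔
      ∀ μ, if μ < 3 then starPairing (twoForm id id a) (graphFrame m) μ = 0
        else fourfoldCross (graphFrame m) μ = 0 := by
  have h_grade := isGrade_curvatureForm a m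
  have h_sub := isGrade_sub h_grade
    (isGrade_smul (6 : ℝ)⁻¹ (isGrade_hstar (isGrade_wedge h_grade (isGrade_wedge h_grade h_grade))))
  rw [complexMul_I_add_cube, pi27_complexMul_eq_zero_iff Complex.I_ne_zero h_sub]
  refine forall_congr' fun μ => ?_
  rw [lambda2Terms_pair_curvatureForm]
  split_ifs <;> simp

theorem statement1_general (a m : Fin 4 → Fin 4 → ℝ) :
    (tau4 (graphFrame m) = 0 ∧
      starG (gram (graphFrame m)) (Real.sign (evalForm Phi8 (graphFrame m))) (twoForm id id a) =
        -twoForm id id a) ↔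
      let F := complexMul Complex.I (twoForm xi xi a) + complexMul Complex.I (twoForm xi yi m)
      pi27 (F + (6 : ℂ)⁻¹ • hstar (wedge F (wedge F F))) = 0 ∧ pi47 (wedge F F) = 0 := by
  set v := graphFrame m
  set β := twoForm id id a
  have h_tau : tau4 v = 0 ↔ fourfoldCross v = 0 := (tau4_eq_zero_iff v).trans funext_iff.symm
  have h_sign : evalForm Phi8 v = cayley v := by rw [Phi8_eq_castForm, evalForm_castForm_coeff]; rfl
  have h_asd (hv : fourfoldCross v = 0) :
      starG (gram v) (Real.sign (cayley v)) β = -β ↔ starPairing β v = 0 :=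
    starG_gram_eq_neg_iff hv (det_gram_graphFrame_pos m).ne' (isGrade_twoForm _ _ _)
  have h_F : complexMul Complex.I (twoForm xi xi a) + complexMul Complex.I (twoForm xi yi m) =
      complexMul Complex.I (curvatureForm a m) := (complexMul_add _ _ _).symm
  rw [h_F, h_tau, h_sign, and_congr_right h_asd]
  dsimp only
  rw [pi27_curvature_eq_zero_iff, pi47_curvature_eq_zero_iff, funext_iff, funext_iff,
    ← forall_and, ← forall_and]
  refine forall_congr' fun μ => ?_
  split_ifs
  · exact and_comm
  · exact Iff.rfl

/-- Theorem 1.2 / Theorem 5.7.  The following are equivalent: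
(1) the graph `S` is Cayley with an appropriate orientation and `β = -√-1 F_∇^B` is
anti-self-dual with respect to the induced metric and the orientation making `S` Cayley;
(2) `π²₇(F_∇ + (1/6) *₈ F_∇³) = 0` and `π⁴₇(F_∇²) = 0`, where `F_∇ = F_∇^B + F_∇^S`. -/
theorem statement1 (B : Set (Fin 4 → ℝ)) (hB : IsOpen B)
    (f : (Fin 4 → ℝ) → (Fin 4 → ℝ)) (hf : ContDiffOn ℝ (⊤ : ℕ∞) f B)
    (A : (Fin 4 → ℝ) → (Fin 4 → ℝ)) (hA : ContDiffOn ℝ (⊤ : ℕ∞) A B) :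
    ((∀ x ∈ B, tau4 (fun j => vG f x j) = 0) ∧
      (∀ x ∈ B, starG (gram8 f x) (eps8 f x) (beta4 A x) = - beta4 A x)) ↔
      (∀ x ∈ B,
        pi27 ((FB8 A x + FS8 f x) + (6 : ℂ)⁻¹ •
          hstar (wedge (FB8 A x + FS8 f x)
            (wedge (FB8 A x + FS8 f x) (FB8 A x + FS8 f x)))) = 0 ∧
        pi47 (wedge (FB8 A x + FS8 f x) (FB8 A x + FS8 f x)) = 0) := by
  rw [← forall₂_and]
  exact forall₂_congr fun x _ => statement1_general (pd A x) (pd f x)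

end FMpaper
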